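/- arXiv:1012.3844 — 2 statements merged into one kernel-verified Lean document; each statement's English description precedes it below -/
import Mathlib

section
/- Let 0 < φ < 1, let f be the density of an absolutely continuous nonnegative random variable Z with distribution function F satisfying F(0) = 0, let v : [0,∞) → ℝ be locally bounded, and let m be the locally bounded solution of m(u) = φ ∫₀^u m(u−y) f(y) dy + v(u). Assume: (1) Z has finite variance; (2) F and v belong to C²₀([0,∞)); (3) f' and v'' belong to C²([0,∞)); (4) I₀(f'') < ∞ and I₂(f'') < ∞; (5) sup_u |u² w₁(u)| < ∞ and sup_u |u² w₂(u)| < ∞; (6) sup_u |u² w₁''(u)| < ∞ and sup_u |u² w₂''(u)| < ∞, where w₁(u) := φ v(0) f(u) + v'(u) and w₂(u) := φ m'(0) f(u) + w₁'(u) with m'(0) = φ v(0) f(0) + v'(0). Then m is four times continuously differentiable on (0,∞) and sup_{u>0} |u² m^{(4)}(u)| ≤ φ ( (I₀(f'') + |f'(0)|) · sup_{u>0}|u² m''(u)| + 2 I₁(f'') · sup_{u>0}|u m''(u)| + I₂(f'') · ‖m''‖ ) + φ f(0) · sup_{u>0}|u² m'''(u)| + sup_{u>0}|u² w₂''(u)|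 < ∞. -/
open MeasureTheory Filter Topology
open scoped ENNReal

/-- The function `w₁(u) = φ v(0) f(u) + v'(u)` (note `m(0) = v(0)`). -/
noncomputable def w1 (φ : ℝ) (v f : ℝ → ℝ) : ℝ → ℝ :=
  fun u => φ * v 0 * f u + deriv v u

/-- The function `w₂(u) = φ m'(0) f(u) + w₁'(u)`, where `m'(0) = φ v(0) f(0) + v'(0)`
is expressed through the limits `f0 = f(0⁺)` and `v'0 = v'(0⁺)`. -/
noncomputable def w2 (φ f0 v'0 : ℝ) (v f : ℝ → ℝ) : ℝ → ℝ :=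
  fun u => φ * (φ * v 0 * f0 + v'0) * f u + deriv (w1 φ v f) u

/-!
The derivative of a convolution `f ∗ q` over `(0,u)` may be let fall on either of its two factors.
Letting it fall on the solution, `m'` and `m''` solve renewal equations with the same kernel `f` and
the forcing terms `w₁` and `w₂`. Letting both derivatives of `q = φ (f ∗ q) + w` fall on the kernel,
`q'' = φ (f(0) q' + f'(0) q + f'' ∗ q) + w''`, and `uⁿ = ((u - y) + y)ⁿ` bounds `uⁿ (f'' ∗ q)` by
weighted suprema of `q` and absolute moments of `f''`. Taking `q = m''` gives the asserted bound.

It is finite because the same binomial expansion, applied to the renewal equation of `m''` itself,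
bounds `uⁿ m''` after absorbing the leading term, as `φ ∫ f < 1`. The formula for `q''` then bounds
`uⁿ (m⁗ - φ f(0) m''')`, and two mean value theorems on `[u, u + 1]`, for `m''` and for
`m''' - φ f(0) m''`, bound `uⁿ m'''`.
-/

section ParametricIntegral

variable {X α E : Type*} [TopologicalSpace X] [FirstCountableTopology X] [MeasurableSpace α]
  [NormedAddCommGroup E] {μ : Measure α} {G : X → α → E}

lemma isClosed_setOf_aestronglyMeasurable
    (hcont : ∀ x, ∀ᵐ a ∂μ, ContinuousAt (fun y => G y a) x) :
    IsClosed {x | AEStronglyMeasurable (G x) μ} := by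
  refine IsSeqClosed.isClosed fun {s x} hs hsx => ?_
  refine aestronglyMeasurable_of_tendsto_ae atTop (f := fun n => G (s n)) hs ?_
  filter_upwards [hcont x] with a ha using ha.tendsto.comp hsx

lemma continuousOn_integral_setOf_aestronglyMeasurable [NormedSpace ℝ E]
    (hcont : ∀ x, ∀ᵐ a ∂μ, ContinuousAt (fun y => G y a) x)
    (hbound : ∀ x, ∃ B : α → ℝ, Integrable B μ ∧ ∀ᶠ y in 𝓝 x, ∀ᵐ a ∂μ, ‖G y a‖ ≤ B a) :
    ContinuousOn (fun x => ∫ a, G x a ∂μ) {x | AEStronglyMeasurable (G x) μ} := by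
  intro x _
  obtain ⟨B, hB, hGB⟩ := hbound x
  refine tendsto_integral_filter_of_dominated_convergence B
    eventually_mem_nhdsWithin (hGB.filter_mono nhdsWithin_le_nhds) hB ?_
  filter_upwards [hcont x] with a ha using ha.tendsto.mono_left nhdsWithin_le_nhds

-- The integral vanishes by convention off the closed set of `x` with `G x` a.e.-measurable.
lemma measurable_integral_of_continuousAt [NormedSpace ℝ E] [MeasurableSpace X] [BorelSpace X]
    [MeasurableSpace E] [BorelSpace E]
    (hcont : ∀ x, ∀ᵐ a ∂μ, ContinuousAt (fun y => G y a) x)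
    (hbound : ∀ x, ∃ B : α → ℝ, Integrable B μ ∧ ∀ᶠ y in 𝓝 x, ∀ᵐ a ∂μ, ‖G y a‖ ≤ B a) :
    Measurable fun x => ∫ a, G x a ∂μ := by
  classical
  set S := {x | AEStronglyMeasurable (G x) μ}
  have hpiecewise : (fun x => ∫ a, G x a ∂μ) = S.piecewise (fun x => ∫ a, G x a ∂μ) 0 := by
    ext x
    by_cases hx : x ∈ S
    · rw [Set.piecewise_eq_of_mem _ _ _ hx]
    · rw [Set.piecewise_eq_of_notMem _ _ _ hx, integral_non_aestronglyMeasurable hx, Pi.zero_apply]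
  rw [hpiecewise]
  exact (continuousOn_integral_setOf_aestronglyMeasurable hcont hbound).measurable_piecewise
    continuousOn_const (isClosed_setOf_aestronglyMeasurable hcont).measurableSet

end ParametricIntegral

section ContinuousFromZero

/-- The class `C⁰₀([0,∞))` with prescribed value at the origin: `h` is continuous on `(0,∞)` and
tends to `c` at `0⁺`. The values of `h` on `(-∞,0]` are irrelevant. -/
structure ContinuousFromZero (h : ℝ → ℝ) (c : ℝ) : Prop where
  continuousOn : ContinuousOn h (Set.Ioi 0)
  tendsto : Tendsto h (𝓝[>] 0) (𝓝 c)

lemma locallyIntegrableOn_Ici_of_bound {h : ℝ → ℝ}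
    (hmeas : AEStronglyMeasurable h (volume.restrict (Set.Ioi 0)))
    (hbound : ∀ K, ∃ C, ∀ u ∈ Set.Ioc 0 K, ‖h u‖ ≤ C) : LocallyIntegrableOn h (Set.Ici 0) := by
  refine (locallyIntegrableOn_iff isClosed_Ici.isLocallyClosed).2 fun s hs hcompact => ?_
  obtain ⟨K, hK⟩ := hcompact.bddAbove
  obtain ⟨C, hC⟩ := hbound K
  have hIoc : IntegrableOn h (Set.Ioc 0 K) :=
    .of_bound measure_Ioc_lt_top (hmeas.mono_set Set.Ioc_subset_Ioi_self) C
      (ae_restrict_of_forall_mem measurableSet_Ioc hC)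
  exact (integrableOn_Icc_iff_integrableOn_Ioc (by finiteness) |>.2 hIoc).mono_set
    fun u hu => ⟨hs hu, hK hu⟩

namespace ContinuousFromZero

variable {g h : ℝ → ℝ} {c d : ℝ}

lemma congr (hh : ContinuousFromZero h c) (hgh : Set.EqOn g h (Set.Ioi 0)) :
    ContinuousFromZero g c :=
  ⟨hh.continuousOn.congr hgh, hh.tendsto.congr' (hgh.symm.eventuallyEq_of_mem self_mem_nhdsWithin)⟩

lemma add (hg : ContinuousFromZero g c) (hh : ContinuousFromZero h d) :
    ContinuousFromZero (fun u => g u + h u) (c + d) :=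
  ⟨hg.continuousOn.add hh.continuousOn, hg.tendsto.add hh.tendsto⟩

lemma const_mul (hh : ContinuousFromZero h c) (r : ℝ) :
    ContinuousFromZero (fun u => r * h u) (r * c) :=
  ⟨hh.continuousOn.const_smul r, hh.tendsto.const_mul r⟩

lemma norm (hh : ContinuousFromZero h c) : ContinuousFromZero (fun u => ‖h u‖) ‖c‖ :=
  ⟨hh.continuousOn.norm, hh.tendsto.norm⟩

lemma continuousOn_update (hh : ContinuousFromZero h c) :
    ContinuousOn (Function.update h 0 c) (Set.Ici 0) := by
  rw [continuousOn_update_iff, Set.Ici_sdiff_left]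
  exact ⟨hh.continuousOn, fun _ => hh.tendsto⟩

lemma exists_bound (hh : ContinuousFromZero h c) (K : ℝ) :
    ∃ C, ∀ u ∈ Set.Ioc 0 K, ‖h u‖ ≤ C := by
  obtain ⟨C, hC⟩ := (isCompact_Icc (a := 0) (b := K)).exists_bound_of_continuousOn
    (hh.continuousOn_update.mono Set.Icc_subset_Ici_self)
  refine ⟨C, fun u hu => ?_⟩
  simpa only [Function.update_of_ne hu.1.ne'] using hC u (Set.Ioc_subset_Icc_self hu)

lemma locallyIntegrableOn_Ici (hh : ContinuousFromZero h c) :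
    LocallyIntegrableOn h (Set.Ici 0) :=
  locallyIntegrableOn_Ici_of_bound (hh.continuousOn.aestronglyMeasurable measurableSet_Ioi)
    hh.exists_bound

end ContinuousFromZero

end ContinuousFromZero

section CausalConvolution

/-- The causal convolution `∫₀ᵘ a(y) b(u-y) dy` for `u > 0`, extended by zero to `u ≤ 0`. -/
noncomputable def causalConv (a b : ℝ → ℝ) : ℝ → ℝ :=
  posConvolution a b (ContinuousLinearMap.mul ℝ ℝ)

variable {a b : ℝ → ℝ} {c u : ℝ}

lemma causalConv_eq_convolution (a b : ℝ → ℝ) :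
    causalConv a b = convolution ((Set.Ioi 0).indicator a) ((Set.Ioi 0).indicator b)
      (ContinuousLinearMap.mul ℝ ℝ) :=
  posConvolution_eq_convolution_indicator a b (ContinuousLinearMap.mul ℝ ℝ) volume

lemma causalConv_comm (a b : ℝ → ℝ) : causalConv a b = causalConv b a := by
  rw [causalConv_eq_convolution, causalConv_eq_convolution, ← convolution_flip]
  congr 1
  ext
  simp

lemma causalConv_apply_of_nonpos (a b : ℝ → ℝ) (hu : u ≤ 0) : causalConv a b u = 0 := by
  rw [causalConv, posConvolution, Set.indicator_of_notMem (Set.notMem_Ioi.2 hu)]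

lemma causalConv_apply (a b : ℝ → ℝ) (hu : 0 < u) :
    causalConv a b u = ∫ y in (0 : ℝ)..u, a y * b (u - y) := by
  rw [causalConv, posConvolution, Set.indicator_of_mem (Set.mem_Ioi.2 hu)]
  rfl

lemma causalConv_apply_eq_setIntegral (a b : ℝ → ℝ) (hu : 0 < u) :
    causalConv a b u = ∫ y in Set.Ioo 0 u, a y * b (u - y) := by
  rw [causalConv_apply a b hu, intervalIntegral.integral_of_le hu.le, integral_Ioc_eq_integral_Ioo]

lemma causalConv_congr_left (b : ℝ → ℝ) {a a' : ℝ → ℝ} (h : Set.EqOn a a' (Set.Ioi 0)) :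
    causalConv a b = causalConv a' b := by
  rw [causalConv_eq_convolution, causalConv_eq_convolution, Set.indicator_congr h]

lemma ContinuousFromZero.continuousAt_indicator (ha : ContinuousFromZero a c) {x : ℝ}
    (hx : x ≠ 0) : ContinuousAt ((Set.Ioi 0).indicator a) x := by
  rcases hx.lt_or_gt with hx | hx
  · exact continuousAt_const.congr (f := 0) <| (eventually_lt_nhds hx).mono fun y hy =>
      (Set.indicator_of_notMem (Set.notMem_Ioi.2 hy.le) a).symm
  · exact (ha.continuousOn.continuousAt (Ioi_mem_nhds hx)).congr <|
      (eventually_gt_nhds hx).mono fun y hy => (Set.indicator_of_mem hy a).symm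

lemma ContinuousFromZero.ae_continuousAt_convolution_integrand (ha : ContinuousFromZero a c)
    (b : ℝ → ℝ) (u : ℝ) : ∀ᵐ y, ContinuousAt (fun x =>
      (Set.Ioi 0).indicator b y * (Set.Ioi 0).indicator a (x - y)) u := by
  filter_upwards [Measure.ae_ne volume u] with y hy
  exact continuousAt_const.mul <| ContinuousAt.comp (f := fun x => x - y)
    (ha.continuousAt_indicator (sub_ne_zero.2 hy.symm)) (continuousAt_id.sub continuousAt_const)

lemma ContinuousFromZero.exists_bound_convolution_integrand (ha : ContinuousFromZero a c)
    {B : ℝ → ℝ} {K : ℝ} (hB : IntegrableOn B (Set.Ioc 0 K))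
    (hbB : ∀ y ∈ Set.Ioc 0 K, ‖b y‖ ≤ B y) :
    ∃ D, Integrable D ∧ ∀ u < K, ∀ y,
      ‖(Set.Ioi 0).indicator b y * (Set.Ioi 0).indicator a (u - y)‖ ≤ D y := by
  obtain ⟨C, hC⟩ := ha.exists_bound K
  have hD : ∀ y ∈ Set.Ioc 0 K, 0 ≤ B y * C := fun y hy =>
    mul_nonneg ((norm_nonneg _).trans (hbB y hy)) ((norm_nonneg _).trans (hC y hy))
  refine ⟨(Set.Ioc 0 K).indicator fun y => B y * C,
    (integrable_indicator_iff measurableSet_Ioc).2 (hB.mul_const C), fun u hu y => ?_⟩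
  by_cases hy : y ∈ Set.Ioi 0 ∧ u - y ∈ Set.Ioi 0
  · obtain ⟨hy0 : 0 < y, huy : 0 < u - y⟩ := hy
    have hyK : y ∈ Set.Ioc 0 K := ⟨hy0, by linarith⟩
    rw [Set.indicator_of_mem (Set.mem_Ioi.2 hy0), Set.indicator_of_mem (Set.mem_Ioi.2 huy),
      Set.indicator_of_mem hyK, norm_mul]
    exact mul_le_mul (hbB y hyK) (hC _ ⟨huy, by linarith⟩) (norm_nonneg _)
      ((norm_nonneg _).trans (hbB y hyK))
  · rw [mul_eq_zero_of_ne_zero_imp_eq_zero, norm_zero]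
    · exact Set.indicator_nonneg hD y
    · exact fun hne =>
        Set.indicator_of_notMem (fun huy => hy ⟨Set.mem_of_indicator_ne_zero hne, huy⟩) a

lemma ContinuousFromZero.measurable_causalConv (ha : ContinuousFromZero a c)
    (hb : ∀ K, ∃ C, ∀ y ∈ Set.Ioc 0 K, ‖b y‖ ≤ C) : Measurable (causalConv b a) := by
  rw [causalConv_eq_convolution]
  refine measurable_integral_of_continuousAt (ha.ae_continuousAt_convolution_integrand b) ?_
  intro u
  obtain ⟨C, hC⟩ := hb (u + 1)
  obtain ⟨D, hD, hle⟩ :=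
    ha.exists_bound_convolution_integrand (integrableOn_const measure_Ioc_lt_top.ne) hC
  exact ⟨D, hD, (eventually_lt_nhds (lt_add_one u)).mono fun x hx => ae_of_all _ (hle x hx)⟩

lemma ContinuousFromZero.exists_bound_of_locallyIntegrableOn (ha : ContinuousFromZero a c)
    (hb : LocallyIntegrableOn b (Set.Ici 0)) (K : ℝ) :
    ∃ D, Integrable D ∧ ∀ u < K, ∀ y,
      ‖(Set.Ioi 0).indicator b y * (Set.Ioi 0).indicator a (u - y)‖ ≤ D y :=
  ha.exists_bound_convolution_integrand
    (((hb.integrableOn_compact_subset Set.Icc_subset_Ici_self isCompact_Icc).mono_set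
      Set.Ioc_subset_Icc_self).norm) fun _ _ => le_rfl

lemma aestronglyMeasurable_indicator_Ioi (hb : LocallyIntegrableOn b (Set.Ici 0)) :
    AEStronglyMeasurable ((Set.Ioi 0).indicator b) :=
  (aestronglyMeasurable_indicator_iff measurableSet_Ioi).2 <|
    hb.aestronglyMeasurable.mono_set Set.Ioi_subset_Ici_self

lemma ContinuousFromZero.convolutionExists_indicator (ha : ContinuousFromZero a c)
    (hb : LocallyIntegrableOn b (Set.Ici 0)) :
    ConvolutionExists ((Set.Ioi 0).indicator b) ((Set.Ioi 0).indicator a)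
      (ContinuousLinearMap.mul ℝ ℝ) := fun u => by
  obtain ⟨D, hD, hle⟩ := ha.exists_bound_of_locallyIntegrableOn hb (u + 1)
  exact hD.mono' ((aestronglyMeasurable_indicator_Ioi hb).convolution_integrand_snd _
    (aestronglyMeasurable_indicator_Ioi ha.locallyIntegrableOn_Ici) u)
    (ae_of_all _ (hle u (lt_add_one u)))

lemma ContinuousFromZero.continuous_causalConv (ha : ContinuousFromZero a c)
    (hb : LocallyIntegrableOn b (Set.Ici 0)) : Continuous (causalConv b a) := by
  rw [causalConv_eq_convolution, ← continuousOn_univ]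
  refine (continuousOn_integral_setOf_aestronglyMeasurable
    (ha.ae_continuousAt_convolution_integrand b) fun u => ?_).mono fun u _ =>
    (ha.convolutionExists_indicator hb u).aestronglyMeasurable
  obtain ⟨D, hD, hle⟩ := ha.exists_bound_of_locallyIntegrableOn hb (u + 1)
  exact ⟨D, hD, (eventually_lt_nhds (lt_add_one u)).mono fun x hx => ae_of_all _ (hle x hx)⟩

lemma causalConv_const (r : ℝ) (a : ℝ → ℝ) (hu : 0 < u) :
    causalConv (fun _ => r) a u = r * ∫ y in (0 : ℝ)..u, a y := by
  rw [causalConv_comm, causalConv_apply a _ hu, intervalIntegral.integral_mul_const, mul_comm]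

lemma ContinuousFromZero.continuousFromZero_causalConv (ha : ContinuousFromZero a c)
    (hb : LocallyIntegrableOn b (Set.Ici 0)) : ContinuousFromZero (causalConv b a) 0 := by
  refine ⟨(ha.continuous_causalConv hb).continuousOn, ?_⟩
  simpa only [causalConv_apply_of_nonpos b a le_rfl] using
    (ha.continuous_causalConv hb).continuousWithinAt (s := Set.Ioi 0) (x := 0) |>.tendsto

lemma indicator_Ioi_causalConv (a b : ℝ → ℝ) :
    (Set.Ioi 0).indicator (causalConv a b) = causalConv a b :=
  Set.indicator_eq_self.2 fun u hu => by
    contrapose! hu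
    simpa only [Function.mem_support, not_not] using causalConv_apply_of_nonpos a b (not_lt.1 hu)

lemma ContinuousFromZero.causalConv_assoc {a₁ a₂ b : ℝ → ℝ} {c₁ c₂ : ℝ}
    (ha₁ : ContinuousFromZero a₁ c₁) (ha₂ : ContinuousFromZero a₂ c₂)
    (hb : LocallyIntegrableOn b (Set.Ici 0)) (u : ℝ) :
    causalConv (causalConv a₁ b) a₂ u = causalConv a₁ (causalConv b a₂) u := by
  have hswap : ∀ {a b : ℝ → ℝ} {c : ℝ}, ContinuousFromZero a c →
      LocallyIntegrableOn b (Set.Ici 0) → ConvolutionExists ((Set.Ioi 0).indicator a)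
        ((Set.Ioi 0).indicator b) (ContinuousLinearMap.mul ℝ ℝ) := fun ha hb x => by
    simpa only [ConvolutionExistsAt, ContinuousLinearMap.mul_apply', mul_comm] using
      (ha.convolutionExists_indicator hb x).integrable_swap
  rw [causalConv_eq_convolution _ a₂, indicator_Ioi_causalConv,
    causalConv_eq_convolution _ (causalConv b a₂), indicator_Ioi_causalConv,
    causalConv_eq_convolution, causalConv_eq_convolution]
  refine convolution_assoc _ _ _ _ (fun x y z => mul_assoc x y z)
    (aestronglyMeasurable_indicator_Ioi ha₁.locallyIntegrableOn_Ici)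
    (aestronglyMeasurable_indicator_Ioi hb)
    (aestronglyMeasurable_indicator_Ioi ha₂.locallyIntegrableOn_Ici)
    (ae_of_all _ (hswap ha₁ hb)) (ae_of_all _ ?_) ?_
  · simp only [norm_indicator_eq_indicator_norm]
    exact ha₂.norm.convolutionExists_indicator hb.norm
  · simp only [norm_indicator_eq_indicator_norm]
    rw [← causalConv_eq_convolution, ← indicator_Ioi_causalConv]
    exact hswap ha₁.norm (ha₂.norm.continuousFromZero_causalConv hb.norm).locallyIntegrableOn_Ici u

end CausalConvolution

section Derivative

variable {a b k : ℝ → ℝ} {c k₀ u : ℝ}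

lemma ContinuousFromZero.const (c : ℝ) : ContinuousFromZero (fun _ => c) c :=
  ⟨continuousOn_const, tendsto_const_nhds⟩

lemma ContinuousFromZero.causalConv_const_add (ha : ContinuousFromZero a c)
    (hb : LocallyIntegrableOn b (Set.Ici 0)) (r : ℝ) (hu : 0 < u) :
    causalConv (fun y => r + b y) a u = r * (∫ y in (0 : ℝ)..u, a y) + causalConv b a u := by
  rw [← causalConv_const r a hu]
  simp only [causalConv_eq_convolution, Set.indicator_add (Set.Ioi 0) (fun _ => r) b]
  exact (ha.convolutionExists_indicator
    (ContinuousFromZero.const r).locallyIntegrableOn_Ici u).add_distrib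
    (ha.convolutionExists_indicator hb u)

lemma ContinuousFromZero.hasDerivAt_integral (ha : ContinuousFromZero a c) (hu : 0 < u) :
    HasDerivAt (fun x => ∫ y in (0 : ℝ)..x, a y) (a u) u := by
  refine intervalIntegral.integral_hasDerivAt_right ?_
    (ha.continuousOn.stronglyMeasurableAtFilter isOpen_Ioi u hu)
    (ha.continuousOn.continuousAt (Ioi_mem_nhds hu))
  exact (intervalIntegrable_iff_integrableOn_Icc_of_le hu.le).2
    (ha.locallyIntegrableOn_Ici.integrableOn_compact_subset Set.Icc_subset_Ici_self isCompact_Icc)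

lemma eq_add_integral_deriv_of_tendsto (hk : DifferentiableOn ℝ k (Set.Ioi 0))
    (hk₀ : Tendsto k (𝓝[>] 0) (𝓝 k₀)) (hk' : LocallyIntegrableOn (deriv k) (Set.Ici 0))
    (hu : 0 < u) : k u = k₀ + ∫ y in (0 : ℝ)..u, deriv k y := by
  rw [← sub_eq_iff_eq_add']
  refine (intervalIntegral.integral_eq_sub_of_hasDerivAt_of_tendsto hu
    (fun x hx => (hk.differentiableAt (Ioi_mem_nhds hx.1)).hasDerivAt) ?_ hk₀ ?_).symm
  · exact (intervalIntegrable_iff_integrableOn_Icc_of_le hu.le).2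
      (hk'.integrableOn_compact_subset Set.Icc_subset_Ici_self isCompact_Icc)
  · exact (hk.continuousOn.continuousAt (Ioi_mem_nhds hu)).continuousWithinAt

-- Writing `k = k₀ + 1 ∗ k'` gives `k ∗ a = k₀ (1 ∗ a) + 1 ∗ (k' ∗ a)` by associativity.
lemma ContinuousFromZero.hasDerivAt_causalConv (ha : ContinuousFromZero a c)
    (hk : DifferentiableOn ℝ k (Set.Ioi 0)) (hk₀ : Tendsto k (𝓝[>] 0) (𝓝 k₀))
    (hk' : LocallyIntegrableOn (deriv k) (Set.Ici 0)) (hu : 0 < u) :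
    HasDerivAt (causalConv k a) (k₀ * a u + causalConv (deriv k) a u) u := by
  have hone : ContinuousFromZero (fun _ => 1) 1 := .const 1
  have hone_conv : LocallyIntegrableOn (causalConv (fun _ => 1) (deriv k)) (Set.Ici 0) := by
    rw [causalConv_comm]
    exact (hone.continuousFromZero_causalConv hk').locallyIntegrableOn_Ici
  have hprim : causalConv k a =
      causalConv (fun x => k₀ + causalConv (fun _ => 1) (deriv k) x) a := by
    refine causalConv_congr_left a fun x hx => ?_
    rw [causalConv_const 1 _ hx, one_mul, eq_add_integral_deriv_of_tendsto hk hk₀ hk' hx]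
  have hconv : ∀ x > 0, causalConv k a x =
      k₀ * (∫ y in (0 : ℝ)..x, a y) + ∫ y in (0 : ℝ)..x, causalConv (deriv k) a y :=
    fun x hx => by
      rw [hprim, ha.causalConv_const_add hone_conv k₀ hx, hone.causalConv_assoc ha hk' x,
        causalConv_const 1 _ hx, one_mul]
  exact (((ha.hasDerivAt_integral hu).const_mul k₀).add
    ((ha.continuousFromZero_causalConv hk').hasDerivAt_integral hu)).congr_of_eventuallyEq
    ((eventually_gt_nhds hu).mono hconv)

end Derivative

section RenewalEquation

/-- `q` solves the renewal equation `q = φ (f ∗ q) + w` on `(0,∞)`, with kernel `f` and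
forcing `w`. -/
def IsRenewalSolution (φ : ℝ) (f w q : ℝ → ℝ) : Prop :=
  ∀ u > 0, q u = φ * causalConv f q u + w u

lemma contDiffOn_add_two_of_deriv {h : ℝ → ℝ} {s : Set ℝ} {n : ℕ} (hs : IsOpen s)
    (hd : DifferentiableOn ℝ h s) (hd' : DifferentiableOn ℝ (deriv h) s)
    (hd'' : ContDiffOn ℝ n (deriv (deriv h)) s) : ContDiffOn ℝ (n + 2) h s := by
  have hderiv : ContDiffOn ℝ (n + 1) (deriv h) s :=
    (contDiffOn_succ_iff_deriv_of_isOpen hs).2 ⟨hd', by simp, hd''⟩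
  rw [← one_add_one_eq_two, ← add_assoc]
  exact (contDiffOn_succ_iff_deriv_of_isOpen hs).2 ⟨hd, by simp, hderiv⟩

namespace IsRenewalSolution

variable {φ f₀ f₀' q₀ w₀ w₀' u : ℝ} {f w q : ℝ → ℝ}

-- The convolution with the continuous `f` is measurable even before `q` is known to be.
lemma continuousFromZero (h : IsRenewalSolution φ f w q) (hf : ContinuousFromZero f f₀)
    (hw : ContinuousFromZero w w₀) (hq : ∀ K, ∃ C, ∀ u ∈ Set.Ioc 0 K, ‖q u‖ ≤ C) :
    ContinuousFromZero q w₀ := by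
  have hmeas : AEStronglyMeasurable q (volume.restrict (Set.Ioi 0)) := by
    have hrhs : AEStronglyMeasurable (fun u => φ * causalConv q f u + w u)
        (volume.restrict (Set.Ioi 0)) :=
      ((hf.measurable_causalConv hq).aestronglyMeasurable.const_mul φ).add
        (hw.continuousOn.aestronglyMeasurable measurableSet_Ioi)
    refine hrhs.congr (ae_restrict_of_forall_mem measurableSet_Ioi fun u hu => ?_)
    rw [h u hu, causalConv_comm]
  have hconv : ContinuousFromZero (causalConv f q) 0 := by
    rw [causalConv_comm]
    exact hf.continuousFromZero_causalConv (locallyIntegrableOn_Ici_of_bound hmeas hq)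
  simpa only [mul_zero, zero_add] using ((hconv.const_mul φ).add hw).congr h

lemma hasDerivAt (h : IsRenewalSolution φ f w q) (hq : ContinuousFromZero q q₀)
    (hf : DifferentiableOn ℝ f (Set.Ioi 0)) (hf₀ : Tendsto f (𝓝[>] 0) (𝓝 f₀))
    (hf' : LocallyIntegrableOn (deriv f) (Set.Ici 0)) (hw : DifferentiableOn ℝ w (Set.Ioi 0))
    (hu : 0 < u) :
    HasDerivAt q (φ * (f₀ * q u + causalConv (deriv f) q u) + deriv w u) u :=
  (((hq.hasDerivAt_causalConv hf hf₀ hf' hu).const_mul φ).add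
    (hw.differentiableAt (Ioi_mem_nhds hu)).hasDerivAt).congr_of_eventuallyEq
    ((eventually_gt_nhds hu).mono h)

lemma continuousFromZero_deriv (h : IsRenewalSolution φ f w q) (hq : ContinuousFromZero q q₀)
    (hf : DifferentiableOn ℝ f (Set.Ioi 0)) (hf₀ : Tendsto f (𝓝[>] 0) (𝓝 f₀))
    (hf' : LocallyIntegrableOn (deriv f) (Set.Ici 0)) (hw : DifferentiableOn ℝ w (Set.Ioi 0))
    (hw' : ContinuousFromZero (deriv w) w₀') :
    ContinuousFromZero (deriv q) (φ * q₀ * f₀ + w₀') := by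
  have hlim : φ * q₀ * f₀ + w₀' = φ * (f₀ * q₀ + 0) + w₀' := by ring
  rw [hlim]
  exact ((((hq.const_mul f₀).add (hq.continuousFromZero_causalConv hf')).const_mul φ).add
    hw').congr fun u hu => (h.hasDerivAt hq hf hf₀ hf' hw hu).deriv

lemma isRenewalSolution_deriv (h : IsRenewalSolution φ f w q) (hq : ContinuousFromZero q q₀)
    (hq_diff : DifferentiableOn ℝ q (Set.Ioi 0))
    (hq' : LocallyIntegrableOn (deriv q) (Set.Ici 0)) (hf : ContinuousFromZero f f₀)
    (hw : DifferentiableOn ℝ w (Set.Ioi 0)) :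
    IsRenewalSolution φ f (fun u => φ * q₀ * f u + deriv w u) (deriv q) := fun u hu => by
  have hderiv : HasDerivAt q
      (φ * (q₀ * f u + causalConv (deriv q) f u) + deriv w u) u := by
    refine (((hf.hasDerivAt_causalConv hq_diff hq.tendsto hq' hu).const_mul φ).add
      (hw.differentiableAt (Ioi_mem_nhds hu)).hasDerivAt).congr_of_eventuallyEq
      ((eventually_gt_nhds hu).mono fun x hx => ?_)
    rw [h x hx, causalConv_comm f q]
    rfl
  rw [hderiv.deriv, causalConv_comm f]
  ring

lemma hasDerivAt_deriv (h : IsRenewalSolution φ f w q) (hq : ContinuousFromZero q q₀)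
    (hf : ContDiffOn ℝ 2 f (Set.Ioi 0)) (hf₀ : Tendsto f (𝓝[>] 0) (𝓝 f₀))
    (hf₀' : Tendsto (deriv f) (𝓝[>] 0) (𝓝 f₀'))
    (hf'' : LocallyIntegrableOn (deriv (deriv f)) (Set.Ici 0))
    (hw : ContDiffOn ℝ 2 w (Set.Ioi 0)) (hu : 0 < u) :
    HasDerivAt (deriv q) (φ * (f₀ * deriv q u +
      (f₀' * q u + causalConv (deriv (deriv f)) q u)) +
        deriv (deriv w) u) u := by
  have hf_diff := hf.differentiableOn two_ne_zero
  have hw_diff := hw.differentiableOn two_ne_zero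
  have hf'_C1 : ContDiffOn ℝ 1 (deriv f) (Set.Ioi 0) := hf.deriv_of_isOpen isOpen_Ioi le_rfl
  have hw'_C1 : ContDiffOn ℝ 1 (deriv w) (Set.Ioi 0) := hw.deriv_of_isOpen isOpen_Ioi le_rfl
  have hf' : ContinuousFromZero (deriv f) f₀' := ⟨hf'_C1.continuousOn, hf₀'⟩
  have hq' := fun {x} (hx : 0 < x) =>
    h.hasDerivAt hq hf_diff hf₀ hf'.locallyIntegrableOn_Ici hw_diff hx
  have hw'_deriv := ((hw'_C1.differentiableOn one_ne_zero).differentiableAt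
    (Ioi_mem_nhds hu)).hasDerivAt
  exact ((((hq' hu).differentiableAt.hasDerivAt.const_mul f₀).add (hq.hasDerivAt_causalConv
    (hf'_C1.differentiableOn one_ne_zero) hf₀' hf'' hu)).const_mul φ).add hw'_deriv
    |>.congr_of_eventuallyEq ((eventually_gt_nhds hu).mono fun x hx => (hq' hx).deriv)

lemma contDiffOn_two (h : IsRenewalSolution φ f w q) (hq : ContinuousFromZero q q₀)
    (hf : ContDiffOn ℝ 2 f (Set.Ioi 0)) (hf₀ : Tendsto f (𝓝[>] 0) (𝓝 f₀))
    (hf₀' : Tendsto (deriv f) (𝓝[>] 0) (𝓝 f₀'))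
    (hf'' : LocallyIntegrableOn (deriv (deriv f)) (Set.Ici 0))
    (hw : ContDiffOn ℝ 2 w (Set.Ioi 0)) : ContDiffOn ℝ 2 q (Set.Ioi 0) := by
  have hq' := fun {x} (hx : 0 < x) => h.hasDerivAt_deriv hq hf hf₀ hf₀' hf'' hw hx
  have hf' : ContinuousFromZero (deriv f) f₀' :=
    ⟨(hf.deriv_of_isOpen isOpen_Ioi (m := 1) le_rfl).continuousOn, hf₀'⟩
  have hq_diff : DifferentiableOn ℝ q (Set.Ioi 0) := fun u hu =>
    (h.hasDerivAt hq (hf.differentiableOn two_ne_zero) hf₀ hf'.locallyIntegrableOn_Ici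
      (hw.differentiableOn two_ne_zero) hu).differentiableAt.differentiableWithinAt
  have hq'_diff : DifferentiableOn ℝ (deriv q) (Set.Ioi 0) := fun u hu =>
    (hq' hu).differentiableAt.differentiableWithinAt
  have hw'' : ContinuousOn (deriv (deriv w)) (Set.Ioi 0) :=
    ((hw.deriv_of_isOpen isOpen_Ioi (m := 1) le_rfl).deriv_of_isOpen isOpen_Ioi (m := 0)
      le_rfl).continuousOn
  have hq''_cont : ContinuousOn (deriv (deriv q)) (Set.Ioi 0) := by
    refine ContinuousOn.congr ?_ fun u hu => (hq' hu).deriv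
    exact (((hq'_diff.continuousOn.const_smul f₀).add ((hq.continuousOn.const_smul f₀').add
      (hq.continuous_causalConv hf'').continuousOn)).const_smul φ).add hw''
  simpa only [Nat.cast_zero, zero_add] using
    contDiffOn_add_two_of_deriv (n := 0) isOpen_Ioi hq_diff hq'_diff (contDiffOn_zero.2 hq''_cont)

end IsRenewalSolution

end RenewalEquation

section WeightedBounds

/-- The weighted supremum `sup_{u ∈ s} |uⁿ h(u)|`, with values in `[0,∞]`. -/
noncomputable def weightedSup (s : Set ℝ) (n : ℕ) (h : ℝ → ℝ) : ℝ≥0∞ :=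
  ⨆ u ∈ s, ‖u ^ n * h u‖ₑ

/-- The absolute moment `I_n(b) = ∫₀^∞ yⁿ |b(y)| dy`, with values in `[0,∞]`. -/
noncomputable def absMoment (n : ℕ) (b : ℝ → ℝ) : ℝ≥0∞ :=
  ∫⁻ y in Set.Ioi 0, ‖y ^ n * b y‖ₑ

variable {a b h w q : ℝ → ℝ} {s t : Set ℝ} {c φ u : ℝ} {k n : ℕ}

lemma enorm_le_weightedSup (n : ℕ) (h : ℝ → ℝ) (hu : u ∈ s) :
    ‖u ^ n * h u‖ₑ ≤ weightedSup s n h :=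
  le_iSup₂ (f := fun u (_ : u ∈ s) => ‖u ^ n * h u‖ₑ) u hu

lemma weightedSup_mono_set (hst : s ⊆ t) (n : ℕ) (h : ℝ → ℝ) :
    weightedSup s n h ≤ weightedSup t n h :=
  biSup_mono hst

lemma weightedSup_congr (hgh : Set.EqOn a b s) (n : ℕ) : weightedSup s n a = weightedSup s n b :=
  biSup_congr fun u hu => by rw [hgh hu]

lemma weightedSup_add_le (s : Set ℝ) (n : ℕ) (a b : ℝ → ℝ) :
    weightedSup s n (fun u => a u + b u) ≤ weightedSup s n a + weightedSup s n b :=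
  iSup₂_le fun u hu => by
    rw [mul_add]
    exact (enorm_add_le _ _).trans
      (add_le_add (enorm_le_weightedSup n a hu) (enorm_le_weightedSup n b hu))

lemma weightedSup_const_mul_le (s : Set ℝ) (n : ℕ) (r : ℝ) (a : ℝ → ℝ) :
    weightedSup s n (fun u => r * a u) ≤ ‖r‖ₑ * weightedSup s n a :=
  iSup₂_le fun u hu => by
    rw [mul_left_comm, enorm_mul]
    exact mul_le_mul_right (enorm_le_weightedSup n a hu) _

lemma enorm_pow_mul_le_add (hkn : k ≤ n) (x y : ℝ) :
    ‖x ^ k * y‖ₑ ≤ ‖x ^ 0 * y‖ₑ + ‖x ^ n * y‖ₑ := by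
  have hpow : ‖x‖ₑ ^ k ≤ 1 + ‖x‖ₑ ^ n := by
    rcases le_total ‖x‖ₑ 1 with hx | hx
    · exact (pow_le_one₀ zero_le hx).trans le_self_add
    · exact (pow_le_pow_right₀ hx hkn).trans le_add_self
  simp only [enorm_mul, enorm_pow, pow_zero, one_mul, ← one_add_mul]
  exact mul_le_mul_left hpow _

lemma weightedSup_le_add (hkn : k ≤ n) (s : Set ℝ) (h : ℝ → ℝ) :
    weightedSup s k h ≤ weightedSup s 0 h + weightedSup s n h :=
  iSup₂_le fun u hu => (enorm_pow_mul_le_add hkn u (h u)).trans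
    (add_le_add (enorm_le_weightedSup 0 h hu) (enorm_le_weightedSup n h hu))

lemma absMoment_le_add (hkn : k ≤ n) (hb : AEStronglyMeasurable b (volume.restrict (Set.Ioi 0))) :
    absMoment k b ≤ absMoment 0 b + absMoment n b := by
  rw [absMoment, absMoment, absMoment, ← lintegral_add_left' (by fun_prop)]
  exact lintegral_mono fun y => enorm_pow_mul_le_add hkn y (b y)

lemma ContinuousFromZero.weightedSup_Ioc_lt_top (hh : ContinuousFromZero h c) (n : ℕ) (K : ℝ) :
    weightedSup (Set.Ioc 0 K) n h < ⊤ := by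
  obtain ⟨C, hC⟩ := hh.exists_bound K
  refine lt_of_le_of_lt (b := ‖K‖ₑ ^ n * ENNReal.ofReal C) (iSup₂_le fun u hu => ?_) (by finiteness)
  rw [enorm_mul, enorm_pow]
  gcongr
  · exact enorm_le_iff_norm_le.2 (abs_le_abs_of_nonneg hu.1.le hu.2)
  · rw [← ofReal_norm]
    exact ENNReal.ofReal_le_ofReal (hC u hu)

lemma ContinuousFromZero.weightedSup_Ioi_lt_top (hh : ContinuousFromZero h c)
    (hn : weightedSup (Set.Ioi 0) n h < ⊤) (hkn : k ≤ n) : weightedSup (Set.Ioi 0) k h < ⊤ := by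
  suffices h0 : weightedSup (Set.Ioi 0) 0 h < ⊤ from
    (weightedSup_le_add hkn _ h).trans_lt (ENNReal.add_lt_top.2 ⟨h0, hn⟩)
  refine lt_of_le_of_lt (iSup₂_le fun u hu => ?_)
    (ENNReal.add_lt_top.2 ⟨hh.weightedSup_Ioc_lt_top 0 1, hn⟩)
  rcases le_or_gt u 1 with hu1 | hu1
  · exact (enorm_le_weightedSup 0 h (Set.mem_Ioc.2 ⟨hu, hu1⟩)).trans le_self_add
  · refine le_trans ?_ ((enorm_le_weightedSup n h hu).trans le_add_self)
    refine enorm_le_iff_norm_le.2 ?_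
    rw [pow_zero, one_mul, norm_mul, norm_pow]
    exact le_mul_of_one_le_left (norm_nonneg _) (one_le_pow₀ (hu1.le.trans (le_abs_self u)))

/-- The binomial sum `∑ₖ (n choose k) (sup_{u ∈ s} |uᵏ a(u)|) I_{n-k}(b)`, which bounds `uⁿ (b ∗ a)`
because `uⁿ = ((u - y) + y)ⁿ`. -/
noncomputable def leibnizSum (s : Set ℝ) (n : ℕ) (b a : ℝ → ℝ) : ℝ≥0∞ :=
  ∑ k ∈ Finset.range (n + 1), n.choose k * (weightedSup s k a * absMoment (n - k) b)

lemma enorm_pow_mul_mul_le (n : ℕ) (b : ℝ → ℝ) {a : ℝ → ℝ} {y : ℝ} (hy : u - y ∈ s) :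
    ‖u ^ n * (b y * a (u - y))‖ₑ ≤
      ∑ k ∈ Finset.range (n + 1), n.choose k * (weightedSup s k a * ‖y ^ (n - k) * b y‖ₑ) := by
  have hexpand : u ^ n * (b y * a (u - y)) = ∑ k ∈ Finset.range (n + 1),
      n.choose k * (((u - y) ^ k * a (u - y)) * (y ^ (n - k) * b y)) := by
    nth_rw 1 [← sub_add_cancel u y]
    rw [add_pow, Finset.sum_mul]
    exact Finset.sum_congr rfl fun k _ => by ring
  rw [hexpand]
  refine (enorm_sum_le _ _).trans (Finset.sum_le_sum fun k _ => ?_)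
  rw [enorm_mul, enorm_mul, Real.enorm_natCast]
  gcongr
  exact enorm_le_weightedSup k a hy

lemma enorm_pow_mul_causalConv_le (hb : AEStronglyMeasurable b (volume.restrict (Set.Ioi 0)))
    (n : ℕ) (a : ℝ → ℝ) (hu : 0 < u) :
    ‖u ^ n * causalConv b a u‖ₑ ≤ leibnizSum (Set.Ioc 0 u) n b a := by
  rw [causalConv_apply_eq_setIntegral b a hu, ← integral_const_mul]
  calc ‖∫ y in Set.Ioo 0 u, u ^ n * (b y * a (u - y))‖ₑ
      ≤ ∫⁻ y in Set.Ioo 0 u, ‖u ^ n * (b y * a (u - y))‖ₑ := enorm_integral_le_lintegral_enorm _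
    _ ≤ ∫⁻ y in Set.Ioo 0 u, ∑ k ∈ Finset.range (n + 1),
          n.choose k * (weightedSup (Set.Ioc 0 u) k a * ‖y ^ (n - k) * b y‖ₑ) :=
        setLIntegral_mono' measurableSet_Ioo fun y hy =>
          enorm_pow_mul_mul_le n b ⟨sub_pos.2 hy.2, sub_le_self u hy.1.le⟩
    _ ≤ ∫⁻ y in Set.Ioi 0, ∑ k ∈ Finset.range (n + 1),
          n.choose k * (weightedSup (Set.Ioc 0 u) k a * ‖y ^ (n - k) * b y‖ₑ) :=
        lintegral_mono_set Set.Ioo_subset_Ioi_self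
    _ = leibnizSum (Set.Ioc 0 u) n b a := by
        rw [lintegral_finsetSum' _ fun k _ => by fun_prop]
        refine Finset.sum_congr rfl fun k _ => ?_
        rw [lintegral_const_mul'' _ (by fun_prop), lintegral_const_mul'' _ (by fun_prop), absMoment]

lemma leibnizSum_mono_set (hst : s ⊆ t) (n : ℕ) (b a : ℝ → ℝ) :
    leibnizSum s n b a ≤ leibnizSum t n b a :=
  Finset.sum_le_sum fun k _ =>
    mul_le_mul_right (mul_le_mul_left (weightedSup_mono_set hst k a) _) _

lemma leibnizSum_lt_top (ha : ∀ k ≤ n, weightedSup s k a < ⊤) (hb : ∀ k ≤ n, absMoment k b < ⊤) :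
    leibnizSum s n b a < ⊤ :=
  ENNReal.sum_lt_top.2 fun k hk => ENNReal.mul_lt_top (ENNReal.natCast_lt_top _) <|
    ENNReal.mul_lt_top (ha k (Finset.mem_range_succ_iff.1 hk)) (hb (n - k) (n.sub_le k))

lemma weightedSup_causalConv_le (hb : AEStronglyMeasurable b (volume.restrict (Set.Ioi 0)))
    (n : ℕ) (a : ℝ → ℝ) :
    weightedSup (Set.Ioi 0) n (causalConv b a) ≤ leibnizSum (Set.Ioi 0) n b a :=
  iSup₂_le fun _ hu => (enorm_pow_mul_causalConv_le hb n a hu).trans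
    (leibnizSum_mono_set Set.Ioc_subset_Ioi_self n b a)

lemma IsRenewalSolution.weightedSup_Ioc_le (h : IsRenewalSolution φ b w q)
    (hb : AEStronglyMeasurable b (volume.restrict (Set.Ioi 0))) (n : ℕ) (K : ℝ) :
    weightedSup (Set.Ioc 0 K) n q ≤
      ‖φ‖ₑ * leibnizSum (Set.Ioc 0 K) n b q + weightedSup (Set.Ioc 0 K) n w := by
  rw [weightedSup_congr (fun u hu => h u hu.1)]
  refine (weightedSup_add_le _ _ _ _).trans (add_le_add ?_ le_rfl)
  refine (weightedSup_const_mul_le _ _ _ _).trans (mul_le_mul_right ?_ _)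
  exact iSup₂_le fun u hu => (enorm_pow_mul_causalConv_le hb n q hu.1).trans
    (leibnizSum_mono_set (Set.Ioc_subset_Ioc_right hu.2) n b q)

lemma weightedSup_Ioi_le_of_Ioc {A : ℝ≥0∞} (hA : ∀ K, weightedSup (Set.Ioc 0 K) n h ≤ A) :
    weightedSup (Set.Ioi 0) n h ≤ A :=
  iSup₂_le fun u hu => (enorm_le_weightedSup n h (Set.mem_Ioc.2 ⟨hu, le_rfl⟩)).trans (hA u)

lemma le_div_one_sub_of_le_mul_add {x ρ A : ℝ≥0∞} (hx : x ≠ ⊤) (hρ : ρ < 1) (hle : x ≤ ρ * x + A) :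
    x ≤ A / (1 - ρ) := by
  rw [ENNReal.le_div_iff_mul_le (.inl (tsub_pos_of_lt hρ).ne') (.inl (by finiteness)),
    ENNReal.mul_sub fun _ _ => hx, mul_one, mul_comm x]
  exact tsub_le_iff_left.2 hle

-- Only the top term of the binomial sum involves `sup |uⁿ q|`; its coefficient `|φ| I₀(b) < 1`
-- lets it be absorbed on the left, where it is finite as long as `u` is confined to `(0,K]`.
theorem IsRenewalSolution.weightedSup_lt_top (h : IsRenewalSolution φ b w q)
    (hq : ContinuousFromZero q c) (hb : AEStronglyMeasurable b (volume.restrict (Set.Ioi 0)))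
    (hφ : ‖φ‖ₑ * absMoment 0 b < 1) (hbn : ∀ k ≤ n, absMoment k b < ⊤)
    (hwn : ∀ k ≤ n, weightedSup (Set.Ioi 0) k w < ⊤) : weightedSup (Set.Ioi 0) n q < ⊤ := by
  induction n using Nat.strong_induction_on with
  | _ n ih =>
    set A : ℝ≥0∞ := ‖φ‖ₑ * (∑ k ∈ Finset.range n,
      n.choose k * (weightedSup (Set.Ioi 0) k q * absMoment (n - k) b)) +
      weightedSup (Set.Ioi 0) n w
    have hA : A < ⊤ := by
      refine ENNReal.add_lt_top.2 ⟨ENNReal.mul_lt_top enorm_lt_top <| ENNReal.sum_lt_top.2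
        fun k hk => ?_, hwn n le_rfl⟩
      have hkn := Finset.mem_range.1 hk
      exact ENNReal.mul_lt_top (ENNReal.natCast_lt_top _) <| ENNReal.mul_lt_top
        (ih k hkn (fun j hj => hbn j (hj.trans hkn.le)) fun j hj => hwn j (hj.trans hkn.le))
        (hbn (n - k) (n.sub_le k))
    refine (weightedSup_Ioi_le_of_Ioc fun K => le_div_one_sub_of_le_mul_add
      (hq.weightedSup_Ioc_lt_top n K).ne hφ ?_).trans_lt
      (ENNReal.div_lt_top hA.ne (tsub_pos_of_lt hφ).ne')
    calc weightedSup (Set.Ioc 0 K) n q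
        ≤ ‖φ‖ₑ * leibnizSum (Set.Ioc 0 K) n b q + weightedSup (Set.Ioc 0 K) n w :=
          h.weightedSup_Ioc_le hb n K
      _ ≤ ‖φ‖ₑ * (∑ k ∈ Finset.range n,
            n.choose k * (weightedSup (Set.Ioi 0) k q * absMoment (n - k) b) +
            weightedSup (Set.Ioc 0 K) n q * absMoment 0 b) + weightedSup (Set.Ioi 0) n w := by
          rw [leibnizSum, Finset.sum_range_succ, Nat.choose_self, Nat.cast_one, one_mul,
            Nat.sub_self]
          gcongr
          · exact weightedSup_mono_set Set.Ioc_subset_Ioi_self _ _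
          · exact weightedSup_mono_set Set.Ioc_subset_Ioi_self _ _
      _ = ‖φ‖ₑ * absMoment 0 b * weightedSup (Set.Ioc 0 K) n q + A := by ring

lemma exists_deriv_eq_of_contDiffOn_two (hq : ContDiffOn ℝ 2 q (Set.Ioi 0)) (r : ℝ) (hu : 0 < u) :
    ∃ ξ ≥ u, ∃ η ≥ u, ∃ t, ‖t‖ ≤ 1 ∧ deriv q u =
      q (u + 1) - q u - r * (q ξ - q u) + t * (deriv (deriv q) η - r * deriv q η) := by
  have hq_deriv : ∀ x ∈ Set.Ioi 0, HasDerivAt q (deriv q x) x := fun x hx =>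
    ((hq.differentiableOn two_ne_zero).differentiableAt (Ioi_mem_nhds hx)).hasDerivAt
  have hq'_deriv : ∀ x ∈ Set.Ioi 0, HasDerivAt (deriv q) (deriv (deriv q) x) x := fun x hx =>
    (((hq.deriv_of_isOpen isOpen_Ioi (m := 1) le_rfl).differentiableOn
      one_ne_zero).differentiableAt (Ioi_mem_nhds hx)).hasDerivAt
  have hg_deriv : ∀ x ∈ Set.Ioi 0, HasDerivAt (fun x => deriv q x - r * q x)
      (deriv (deriv q) x - r * deriv q x) x := fun x hx =>
    (hq'_deriv x hx).sub ((hq_deriv x hx).const_mul r)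
  obtain ⟨ξ, hξ, hq'ξ⟩ := exists_hasDerivAt_eq_slope q (deriv q) (lt_add_one u)
    (fun x hx => (hq_deriv x (hu.trans_le hx.1)).continuousAt.continuousWithinAt)
    fun x hx => hq_deriv x (hu.trans hx.1)
  obtain ⟨η, hη, hgη⟩ := exists_hasDerivAt_eq_slope _ _ hξ.1
    (fun x hx => (hg_deriv x (hu.trans_le hx.1)).continuousAt.continuousWithinAt)
    fun x hx => hg_deriv x (hu.trans hx.1)
  refine ⟨ξ, hξ.1.le, η, hη.1.le, u - ξ, ?_, ?_⟩
  · rw [Real.norm_eq_abs, abs_le]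
    constructor <;> linarith [hξ.1, hξ.2]
  · rw [eq_div_iff (sub_pos.2 hξ.1).ne'] at hgη
    rw [add_sub_cancel_left, div_one] at hq'ξ
    linear_combination hq'ξ + hgη

lemma weightedSup_deriv_le (hq : ContDiffOn ℝ 2 q (Set.Ioi 0)) (r : ℝ) (n : ℕ) :
    weightedSup (Set.Ioi 0) n (deriv q) ≤ 2 * (1 + ‖r‖ₑ) * weightedSup (Set.Ioi 0) n q +
      weightedSup (Set.Ioi 0) n (fun u => deriv (deriv q) u - r * deriv q u) := by
  refine iSup₂_le fun u (hu : 0 < u) => ?_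
  have hle : ∀ (g : ℝ → ℝ) {x : ℝ}, u ≤ x → ‖u ^ n * g x‖ₑ ≤ weightedSup (Set.Ioi 0) n g :=
    fun g x hx => by
      refine le_trans ?_ (enorm_le_weightedSup n g (hu.trans_le hx))
      rw [enorm_mul, enorm_mul, enorm_pow, enorm_pow]
      gcongr
      exact enorm_le_iff_norm_le.2 (abs_le_abs_of_nonneg hu.le hx)
  obtain ⟨ξ, hξ, η, hη, t, ht, hq'u⟩ := exists_deriv_eq_of_contDiffOn_two hq r hu
  set S := weightedSup (Set.Ioi 0) n q
  set G := weightedSup (Set.Ioi 0) n (fun u => deriv (deriv q) u - r * deriv q u)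
  have hdiff : ∀ {x : ℝ}, u ≤ x → ‖u ^ n * q x - u ^ n * q u‖ₑ ≤ S + S := fun hx =>
    enorm_sub_le.trans (add_le_add (hle q hx) (hle q le_rfl))
  have hremainder : ‖t * (u ^ n * (deriv (deriv q) η - r * deriv q η))‖ₑ ≤ G := by
    rw [enorm_mul, ← ofReal_norm t]
    exact mul_le_of_le_one_of_le (ENNReal.ofReal_le_one.2 ht) (hle _ hη)
  calc ‖u ^ n * deriv q u‖ₑ
      = ‖(u ^ n * q (u + 1) - u ^ n * q u) - r * (u ^ n * q ξ - u ^ n * q u) +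
          t * (u ^ n * (deriv (deriv q) η - r * deriv q η))‖ₑ := by rw [hq'u]; ring_nf
    _ ≤ (S + S) + ‖r‖ₑ * (S + S) + G := by
        refine (enorm_add_le _ _).trans (add_le_add (enorm_sub_le.trans ?_) hremainder)
        rw [enorm_mul]
        exact add_le_add (hdiff (le_add_of_nonneg_right zero_le_one))
          (mul_le_mul_right (hdiff hξ) _)
    _ = 2 * (1 + ‖r‖ₑ) * S + G := by ring

/-- The right-hand side of the bound on `sup |uⁿ q''|` for a solution `q` of `q = φ (f ∗ q) + w`,
where `f₀` and `f₀'` are the limits of `f` and `f'` at `0`. -/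
noncomputable def secondDerivBound (φ f₀ f₀' : ℝ) (n : ℕ) (f w q : ℝ → ℝ) : ℝ≥0∞ :=
  ‖φ‖ₑ * (‖f₀'‖ₑ * weightedSup (Set.Ioi 0) n q + leibnizSum (Set.Ioi 0) n (deriv (deriv f)) q)
    + ‖φ * f₀‖ₑ * weightedSup (Set.Ioi 0) n (deriv q)
    + weightedSup (Set.Ioi 0) n (deriv (deriv w))

section

variable {f : ℝ → ℝ} {f₀ f₀' : ℝ}

lemma IsRenewalSolution.weightedSup_deriv_deriv_sub_le
    (h : IsRenewalSolution φ f w q) (hq : ContinuousFromZero q c)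
    (hf : ContDiffOn ℝ 2 f (Set.Ioi 0)) (hf₀ : Tendsto f (𝓝[>] 0) (𝓝 f₀))
    (hf₀' : Tendsto (deriv f) (𝓝[>] 0) (𝓝 f₀'))
    (hf'' : LocallyIntegrableOn (deriv (deriv f)) (Set.Ici 0))
    (hw : ContDiffOn ℝ 2 w (Set.Ioi 0)) (n : ℕ) :
    weightedSup (Set.Ioi 0) n (fun u => deriv (deriv q) u - φ * f₀ * deriv q u) ≤
      ‖φ‖ₑ * (‖f₀'‖ₑ * weightedSup (Set.Ioi 0) n q + leibnizSum (Set.Ioi 0) n (deriv (deriv f)) q)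
        + weightedSup (Set.Ioi 0) n (deriv (deriv w)) := by
  have hq'' : Set.EqOn (fun u => deriv (deriv q) u - φ * f₀ * deriv q u)
      (fun u => φ * (f₀' * q u + causalConv (deriv (deriv f)) q u) + deriv (deriv w) u)
      (Set.Ioi 0) := fun u hu => by
    simp only [(h.hasDerivAt_deriv hq hf hf₀ hf₀' hf'' hw hu).deriv]
    ring
  rw [weightedSup_congr hq'']
  refine (weightedSup_add_le _ _ _ _).trans (add_le_add_left ?_ _)
  refine (weightedSup_const_mul_le _ _ _ _).trans (mul_le_mul_right ?_ _)
  refine (weightedSup_add_le _ _ _ _).trans (add_le_add (weightedSup_const_mul_le _ _ _ _) ?_)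
  exact weightedSup_causalConv_le
    (hf''.aestronglyMeasurable.mono_set Set.Ioi_subset_Ici_self) n q

theorem IsRenewalSolution.weightedSup_deriv_deriv_le
    (h : IsRenewalSolution φ f w q) (hq : ContinuousFromZero q c)
    (hf : ContDiffOn ℝ 2 f (Set.Ioi 0)) (hf₀ : Tendsto f (𝓝[>] 0) (𝓝 f₀))
    (hf₀' : Tendsto (deriv f) (𝓝[>] 0) (𝓝 f₀'))
    (hf'' : LocallyIntegrableOn (deriv (deriv f)) (Set.Ici 0))
    (hw : ContDiffOn ℝ 2 w (Set.Ioi 0)) (n : ℕ) :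
    weightedSup (Set.Ioi 0) n (deriv (deriv q)) ≤ secondDerivBound φ f₀ f₀' n f w q := by
  have hsplit : deriv (deriv q) =
      fun u => (deriv (deriv q) u - φ * f₀ * deriv q u) + φ * f₀ * deriv q u := by
    simp only [sub_add_cancel]
  rw [hsplit, secondDerivBound, add_right_comm]
  exact (weightedSup_add_le _ _ _ _).trans (add_le_add
    (h.weightedSup_deriv_deriv_sub_le hq hf hf₀ hf₀' hf'' hw n) (weightedSup_const_mul_le _ _ _ _))

theorem IsRenewalSolution.secondDerivBound_lt_top
    (h : IsRenewalSolution φ f w q) (hq : ContinuousFromZero q c)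
    (hf : ContDiffOn ℝ 2 f (Set.Ioi 0)) (hf₀ : Tendsto f (𝓝[>] 0) (𝓝 f₀))
    (hf₀' : Tendsto (deriv f) (𝓝[>] 0) (𝓝 f₀'))
    (hf'' : LocallyIntegrableOn (deriv (deriv f)) (Set.Ici 0))
    (hw : ContDiffOn ℝ 2 w (Set.Ioi 0)) (hqn : weightedSup (Set.Ioi 0) n q < ⊤)
    (hf''n : ∀ k ≤ n, absMoment k (deriv (deriv f)) < ⊤)
    (hw''n : weightedSup (Set.Ioi 0) n (deriv (deriv w)) < ⊤) :
    secondDerivBound φ f₀ f₀' n f w q < ⊤ := by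
  have hsum : leibnizSum (Set.Ioi 0) n (deriv (deriv f)) q < ⊤ :=
    leibnizSum_lt_top (fun _ hk => hq.weightedSup_Ioi_lt_top hqn hk) hf''n
  have hdiff := (h.weightedSup_deriv_deriv_sub_le hq hf hf₀ hf₀' hf'' hw n).trans_lt
    (show _ < ⊤ by finiteness)
  have hq'n := (weightedSup_deriv_le (h.contDiffOn_two hq hf hf₀ hf₀' hf'' hw) (φ * f₀) n).trans_lt
    (show _ < ⊤ by finiteness)
  unfold secondDerivBound
  finiteness

end

lemma weightedSup_Ioi_lt_top_of_bound (hM : ∃ M, ∀ u : ℝ, 0 < u → |u ^ n * h u| ≤ M) :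
    weightedSup (Set.Ioi 0) n h < ⊤ := by
  obtain ⟨M, hM⟩ := hM
  refine (iSup₂_le fun u hu => ?_).trans_lt (ENNReal.ofReal_lt_top (r := M))
  rw [← ofReal_norm]
  exact ENNReal.ofReal_le_ofReal (hM u hu)

lemma absMoment_lt_top_of_integrableOn (hb : AEStronglyMeasurable b (volume.restrict (Set.Ioi 0)))
    (hb0 : IntegrableOn (fun y => |b y|) (Set.Ioi 0))
    (hbn : IntegrableOn (fun y => y ^ n * |b y|) (Set.Ioi 0)) (hkn : k ≤ n) :
    absMoment k b < ⊤ := by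
  have hlt : ∀ {j}, IntegrableOn (fun y => y ^ j * |b y|) (Set.Ioi 0) → absMoment j b < ⊤ :=
    fun hj => by
      simpa only [absMoment, HasFiniteIntegral, enorm_mul, Real.enorm_abs]
        using hj.hasFiniteIntegral
  exact (absMoment_le_add hkn hb).trans_lt
    (ENNReal.add_lt_top.2 ⟨hlt (by simpa only [pow_zero, one_mul] using hb0), hlt hbn⟩)

lemma absMoment_eq_ofReal_integral (hb : AEStronglyMeasurable b (volume.restrict (Set.Ioi 0)))
    (hfin : absMoment n b < ⊤) :
    absMoment n b = ENNReal.ofReal (∫ y in Set.Ioi 0, y ^ n * |b y|) := by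
  have hint : IntegrableOn (fun y => y ^ n * b y) (Set.Ioi 0) := ⟨by fun_prop, hfin⟩
  rw [absMoment, ← ofReal_integral_norm_eq_lintegral_enorm hint]
  congr 1
  refine setIntegral_congr_fun measurableSet_Ioi fun y (hy : 0 < y) => ?_
  rw [norm_mul, norm_pow, Real.norm_of_nonneg hy.le, Real.norm_eq_abs]

lemma locallyIntegrableOn_Ici_of_absMoment_zero_lt_top
    (hb : AEStronglyMeasurable b (volume.restrict (Set.Ioi 0))) (hfin : absMoment 0 b < ⊤) :
    LocallyIntegrableOn b (Set.Ici 0) :=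
  have hint : IntegrableOn b (Set.Ioi 0) :=
    ⟨hb, by simpa only [absMoment, pow_zero, one_mul, HasFiniteIntegral] using hfin⟩
  ((integrableOn_Ici_iff_integrableOn_Ioi).2 hint).locallyIntegrableOn

lemma enorm_mul_absMoment_zero_lt_one (hb : AEStronglyMeasurable b (volume.restrict (Set.Ioi 0)))
    (hfin : absMoment 0 b < ⊤) (hφ : |φ| * ∫ y in Set.Ioi 0, |b y| < 1) :
    ‖φ‖ₑ * absMoment 0 b < 1 := by
  rw [absMoment_eq_ofReal_integral hb hfin, ← ofReal_norm, ← ENNReal.ofReal_mul (norm_nonneg φ),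
    ENNReal.ofReal_lt_one]
  simpa only [pow_zero, one_mul, Real.norm_eq_abs] using hφ

lemma secondDerivBound_two_eq {f : ℝ → ℝ} (φ f₀ f₀' : ℝ) (w q : ℝ → ℝ)
    (hf''_fin : ∀ k ≤ 2, absMoment k (deriv (deriv f)) < ⊤) :
    secondDerivBound φ f₀ f₀' 2 f w q =
      ENNReal.ofReal |φ| *
        (ENNReal.ofReal ((∫ y in Set.Ioi 0, |deriv (deriv f) y|) + |f₀'|)
            * (⨆ u ∈ Set.Ioi 0, ‖u ^ 2 * q u‖ₑ)
          + 2 * ENNReal.ofReal (∫ y in Set.Ioi 0, y * |deriv (deriv f) y|)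
            * (⨆ u ∈ Set.Ioi 0, ‖u * q u‖ₑ)
          + ENNReal.ofReal (∫ y in Set.Ioi 0, y ^ 2 * |deriv (deriv f) y|)
            * (⨆ u ∈ Set.Ioi 0, ‖q u‖ₑ))
      + ENNReal.ofReal |φ * f₀| * (⨆ u ∈ Set.Ioi 0, ‖u ^ 2 * deriv q u‖ₑ)
      + ⨆ u ∈ Set.Ioi 0, ‖u ^ 2 * deriv (deriv w) u‖ₑ := by
  have hmoment := fun k hk =>
    absMoment_eq_ofReal_integral (measurable_deriv (deriv f)).aestronglyMeasurable (hf''_fin k hk)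
  rw [secondDerivBound, leibnizSum, Finset.sum_range_succ, Finset.sum_range_succ,
    Finset.sum_range_one, hmoment 2 le_rfl, hmoment 1 one_le_two, hmoment 0 zero_le_two,
    ENNReal.ofReal_add (integral_nonneg fun y => abs_nonneg _) (abs_nonneg _)]
  simp only [weightedSup, ← ofReal_norm, Real.norm_eq_abs, pow_zero, pow_one, one_mul]
  norm_num
  ring

end WeightedBounds

section Forcing

variable {f₀' v₀'' : ℝ} {f v : ℝ → ℝ} {n : ℕ}

lemma contDiffOn_w1 (φ : ℝ) (hf : ContDiffOn ℝ n f (Set.Ioi 0))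
    (hv : ContDiffOn ℝ (n + 1) v (Set.Ioi 0)) : ContDiffOn ℝ n (w1 φ v f) (Set.Ioi 0) :=
  (contDiffOn_const.mul hf).add (hv.deriv_of_isOpen isOpen_Ioi le_rfl)

lemma contDiffOn_w2 (φ f₀ v₀' : ℝ) (hf : ContDiffOn ℝ (n + 1) f (Set.Ioi 0))
    (hv : ContDiffOn ℝ (n + 2) v (Set.Ioi 0)) : ContDiffOn ℝ n (w2 φ f₀ v₀' v f) (Set.Ioi 0) :=
  (contDiffOn_const.mul (hf.of_le le_self_add)).add <|
    (contDiffOn_w1 (n := n + 1) φ (by exact_mod_cast hf)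
      (by exact_mod_cast hv)).deriv_of_isOpen isOpen_Ioi le_rfl

lemma continuousFromZero_deriv_w1 (φ : ℝ) (hf : DifferentiableOn ℝ f (Set.Ioi 0))
    (hf' : ContinuousFromZero (deriv f) f₀') (hv : DifferentiableOn ℝ (deriv v) (Set.Ioi 0))
    (hv'' : ContinuousFromZero (deriv (deriv v)) v₀'') :
    ContinuousFromZero (deriv (w1 φ v f)) (φ * v 0 * f₀' + v₀'') :=
  ((hf'.const_mul (φ * v 0)).add hv'').congr fun _ hu =>
    (((hf.differentiableAt (Ioi_mem_nhds hu)).hasDerivAt.const_mul (φ * v 0)).add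
      (hv.differentiableAt (Ioi_mem_nhds hu)).hasDerivAt).deriv

end Forcing

section FourthDerivative

variable {φ f₀ f₀' q₀ w₀' : ℝ} {f w q : ℝ → ℝ}

lemma IsRenewalSolution.differentiate (h : IsRenewalSolution φ f w q)
    (hq : ContinuousFromZero q q₀) (hf : ContinuousFromZero f f₀)
    (hf_diff : DifferentiableOn ℝ f (Set.Ioi 0)) (hf' : ContinuousFromZero (deriv f) f₀')
    (hw : DifferentiableOn ℝ w (Set.Ioi 0)) (hw' : ContinuousFromZero (deriv w) w₀') :
    DifferentiableOn ℝ q (Set.Ioi 0) ∧ ContinuousFromZero (deriv q) (φ * q₀ * f₀ + w₀') ∧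
      IsRenewalSolution φ f (fun u => φ * q₀ * f u + deriv w u) (deriv q) := by
  have hf'_int := hf'.locallyIntegrableOn_Ici
  have hq_diff : DifferentiableOn ℝ q (Set.Ioi 0) := fun u hu =>
    (h.hasDerivAt hq hf_diff hf.tendsto hf'_int hw hu).differentiableAt.differentiableWithinAt
  have hq' := h.continuousFromZero_deriv hq hf_diff hf.tendsto hf'_int hw hw'
  exact ⟨hq_diff, hq', h.isRenewalSolution_deriv hq hq_diff hq'.locallyIntegrableOn_Ici hf hw⟩

theorem IsRenewalSolution.contDiffOn_four_and_weightedSup_le {v m : ℝ → ℝ} {v₀' v₀'' : ℝ} {n : ℕ}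
    (h : IsRenewalSolution φ f v m) (hm : ∀ K, ∃ C, ∀ u ∈ Set.Ioc 0 K, ‖m u‖ ≤ C)
    (hf : ContDiffOn ℝ 3 f (Set.Ioi 0)) (hf₀ : Tendsto f (𝓝[>] 0) (𝓝 f₀))
    (hf₀' : Tendsto (deriv f) (𝓝[>] 0) (𝓝 f₀'))
    (hv : ContDiffOn ℝ 4 v (Set.Ioi 0)) (hv₀ : Tendsto v (𝓝[>] 0) (𝓝 (v 0)))
    (hv₀' : Tendsto (deriv v) (𝓝[>] 0) (𝓝 v₀'))
    (hv₀'' : Tendsto (deriv (deriv v)) (𝓝[>] 0) (𝓝 v₀''))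
    (hφ : ‖φ‖ₑ * absMoment 0 f < 1) (hfn : ∀ k ≤ n, absMoment k f < ⊤)
    (hf''n : ∀ k ≤ n, absMoment k (deriv (deriv f)) < ⊤)
    (hw₂ : weightedSup (Set.Ioi 0) n (w2 φ f₀ v₀' v f) < ⊤)
    (hw₂'' : weightedSup (Set.Ioi 0) n (deriv (deriv (w2 φ f₀ v₀' v f))) < ⊤) :
    ContDiffOn ℝ 4 m (Set.Ioi 0) ∧
      weightedSup (Set.Ioi 0) n (deriv (deriv (deriv (deriv m)))) ≤
        secondDerivBound φ f₀ f₀' n f (w2 φ f₀ v₀' v f) (deriv (deriv m)) ∧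
      secondDerivBound φ f₀ f₀' n f (w2 φ f₀ v₀' v f) (deriv (deriv m)) < ⊤ := by
  have hf_zero : ContinuousFromZero f f₀ := ⟨hf.continuousOn, hf₀⟩
  have hf'_zero : ContinuousFromZero (deriv f) f₀' :=
    ⟨hf.continuousOn_deriv_of_isOpen isOpen_Ioi (by norm_num), hf₀'⟩
  have hf_diff := hf.differentiableOn three_ne_zero
  have hf_C2 : ContDiffOn ℝ 2 f (Set.Ioi 0) := hf.of_le (by norm_num)
  have hf'' := locallyIntegrableOn_Ici_of_absMoment_zero_lt_top
    (measurable_deriv (deriv f)).aestronglyMeasurable (hf''n 0 n.zero_le)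
  have hv'_C3 : ContDiffOn ℝ 3 (deriv v) (Set.Ioi 0) :=
    hv.deriv_of_isOpen isOpen_Ioi (by norm_num)
  have hv'_zero : ContinuousFromZero (deriv v) v₀' := ⟨hv'_C3.continuousOn, hv₀'⟩
  have hw₁_C2 : ContDiffOn ℝ 2 (w1 φ v f) (Set.Ioi 0) :=
    contDiffOn_w1 (n := 2) φ hf_C2 (hv.of_le (by norm_num))
  have hw₂_C2 : ContDiffOn ℝ 2 (w2 φ f₀ v₀' v f) (Set.Ioi 0) :=
    contDiffOn_w2 (n := 2) φ f₀ v₀' hf hv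
  have hw₁'_zero := continuousFromZero_deriv_w1 φ hf_diff hf'_zero
    (hv'_C3.differentiableOn three_ne_zero)
    ⟨hv'_C3.continuousOn_deriv_of_isOpen isOpen_Ioi (by norm_num), hv₀''⟩
  have hw₂_zero : ContinuousFromZero (w2 φ f₀ v₀' v f) _ := (hf_zero.const_mul _).add hw₁'_zero
  have hm_zero := h.continuousFromZero hf_zero ⟨hv.continuousOn, hv₀⟩ hm
  obtain ⟨hm_diff, hm'_zero, h'⟩ := h.differentiate hm_zero hf_zero hf_diff hf'_zero
    (hv.differentiableOn four_ne_zero) hv'_zero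
  obtain ⟨hm'_diff, hm''_zero, h''⟩ := h'.differentiate hm'_zero hf_zero hf_diff hf'_zero
    (hw₁_C2.differentiableOn two_ne_zero) hw₁'_zero
  have hm''n := h''.weightedSup_lt_top hm''_zero
    (hf.continuousOn.aestronglyMeasurable measurableSet_Ioi) hφ hfn
    fun _ => hw₂_zero.weightedSup_Ioi_lt_top hw₂
  have hm''_C2 := h''.contDiffOn_two hm''_zero hf_C2 hf₀ hf₀' hf'' hw₂_C2
  exact ⟨contDiffOn_add_two_of_deriv (n := 2) isOpen_Ioi hm_diff hm'_diff hm''_C2,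
    h''.weightedSup_deriv_deriv_le hm''_zero hf_C2 hf₀ hf₀' hf'' hw₂_C2 n,
    h''.secondDerivBound_lt_top hm''_zero hf_C2 hf₀ hf₀' hf'' hw₂_C2 hm''n hf''n hw₂''⟩

end FourthDerivative

theorem stmt_13_general (φ : ℝ) (f v m : ℝ → ℝ)
    (hf_integrable : IntegrableOn f (Set.Ioi 0))
    (hφ : |φ| * ∫ y in Set.Ioi (0 : ℝ), |f y| < 1)
    (hm_loc : ∀ x : ℝ, 0 < x → ∃ M, ∀ u ∈ Set.Icc (0 : ℝ) x, |m u| ≤ M)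
    (hm_eq : ∀ u : ℝ, 0 ≤ u → m u = φ * (∫ y in (0 : ℝ)..u, m (u - y) * f y) + v u)
    (hZ2 : IntegrableOn (fun y => y ^ 2 * f y) (Set.Ioi 0))
    (hv_c : ContinuousOn v (Set.Ici 0)) (f0 f'0 v'0 : ℝ)
    (hf0 : Tendsto f (𝓝[>] 0) (𝓝 f0)) (hv'0 : Tendsto (deriv v) (𝓝[>] 0) (𝓝 v'0))
    (hf_cd3 : ContDiffOn ℝ 3 f (Set.Ioi 0)) (hf'0 : Tendsto (deriv f) (𝓝[>] 0) (𝓝 f'0))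
    (hv_cd4 : ContDiffOn ℝ 4 v (Set.Ioi 0))
    (hv''0 : ∃ L, Tendsto (iteratedDeriv 2 v) (𝓝[>] 0) (𝓝 L))
    (h4a : IntegrableOn (fun y => |iteratedDeriv 2 f y|) (Set.Ioi 0))
    (h4b : IntegrableOn (fun y => y ^ 2 * |iteratedDeriv 2 f y|) (Set.Ioi 0))
    (h5b : ∃ M, ∀ u : ℝ, 0 < u → |u ^ 2 * w2 φ f0 v'0 v f u| ≤ M)
    (h6b : ∃ M, ∀ u : ℝ, 0 < u → |u ^ 2 * iteratedDeriv 2 (w2 φ f0 v'0 v f) u| ≤ M) :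
    ContDiffOn ℝ 4 m (Set.Ioi 0) ∧
    ∀ B : ℝ≥0∞,
      B = ENNReal.ofReal |φ| *
            (ENNReal.ofReal ((∫ y in Set.Ioi (0 : ℝ), |iteratedDeriv 2 f y|) + |f'0|)
                * (⨆ u ∈ Set.Ioi (0 : ℝ), ‖u ^ 2 * iteratedDeriv 2 m u‖ₑ)
              + 2 * ENNReal.ofReal (∫ y in Set.Ioi (0 : ℝ), y * |iteratedDeriv 2 f y|)
                * (⨆ u ∈ Set.Ioi (0 : ℝ), ‖u * iteratedDeriv 2 m u‖ₑ)
              + ENNReal.ofReal (∫ y in Set.Ioi (0 : ℝ), y ^ 2 * |iteratedDeriv 2 f y|)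
                * (⨆ u ∈ Set.Ioi (0 : ℝ), ‖iteratedDeriv 2 m u‖ₑ))
          + ENNReal.ofReal |φ * f0| * (⨆ u ∈ Set.Ioi (0 : ℝ), ‖u ^ 2 * iteratedDeriv 3 m u‖ₑ)
          + (⨆ u ∈ Set.Ioi (0 : ℝ), ‖u ^ 2 * iteratedDeriv 2 (w2 φ f0 v'0 v f) u‖ₑ) →
      (⨆ u ∈ Set.Ioi (0 : ℝ), ‖u ^ 2 * iteratedDeriv 4 m u‖ₑ) ≤ B ∧ B < ⊤ := by
  simp only [iteratedDeriv_eq_iterate, Function.iterate_succ, Function.iterate_zero,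
    Function.comp_apply, id_eq] at *
  obtain ⟨v''0, hv''0⟩ := hv''0
  have hf_meas := hf_integrable.aestronglyMeasurable
  have hf_moment : ∀ k ≤ 2, absMoment k f < ⊤ := fun _ => absMoment_lt_top_of_integrableOn hf_meas
    hf_integrable.abs
    (by simpa only [IntegrableOn, abs_mul, abs_pow, sq_abs] using hZ2.abs)
  have hf''_moment : ∀ k ≤ 2, absMoment k (deriv (deriv f)) < ⊤ := fun _ =>
    absMoment_lt_top_of_integrableOn (measurable_deriv _).aestronglyMeasurable h4a h4b
  have hm : IsRenewalSolution φ f v m := fun u hu => by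
    simp only [hm_eq u hu.le, causalConv_apply f m hu, mul_comm (f _)]
  have hm_bound : ∀ K, ∃ C, ∀ u ∈ Set.Ioc 0 K, ‖m u‖ ≤ C := fun K => by
    obtain ⟨C, hC⟩ := hm_loc (max K 1) (by positivity)
    exact ⟨C, fun u hu => hC u ⟨hu.1.le, hu.2.trans (le_max_left K 1)⟩⟩
  have hv0 : Tendsto v (𝓝[>] 0) (𝓝 (v 0)) :=
    (hv_c 0 Set.self_mem_Ici).mono_left (nhdsWithin_mono _ Set.Ioi_subset_Ici_self)
  obtain ⟨hm_C4, hle, hlt⟩ := hm.contDiffOn_four_and_weightedSup_le hm_bound hf_cd3 hf0 hf'0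
    hv_cd4 hv0 hv'0 hv''0 (enorm_mul_absMoment_zero_lt_one hf_meas (hf_moment 0 zero_le_two) hφ)
    hf_moment hf''_moment (weightedSup_Ioi_lt_top_of_bound h5b)
    (weightedSup_Ioi_lt_top_of_bound h6b)
  refine ⟨hm_C4, fun B hB => ?_⟩
  rw [← secondDerivBound_two_eq φ f0 f'0 _ _ hf''_moment] at hB
  exact hB ▸ ⟨hle, hlt⟩

/-- under conditions (1)-(6) on the defective renewal equation,
`m` is four times continuously differentiable on `(0,∞)` and
`‖u² m⁗(u)‖ ≤ φ((I₀(f'') + |f'(0)|)‖u² m''(u)‖ + 2 I₁(f'')‖u m''(u)‖ + I₂(f'')‖m''‖)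
 + φ f(0) ‖u² m'''(u)‖ + ‖u² w₂''(u)‖ < ∞`,
all suprema being over `(0,∞)` and computed in `ℝ≥0∞`. -/
theorem stmt_13 (φ : ℝ) (hφ0 : 0 < φ) (hφ1 : φ < 1)
    (f F v m : ℝ → ℝ)
    (hf_nonneg : ∀ u : ℝ, 0 < u → 0 ≤ f u)
    (hf_integrable : MeasureTheory.IntegrableOn f (Set.Ioi 0))
    (hf_total : ∫ y in Set.Ioi (0:ℝ), f y = 1)
    (hF_def : ∀ u : ℝ, 0 ≤ u → F u = ∫ y in (0:ℝ)..u, f y)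
    (hFf : ∀ u : ℝ, 0 < u → HasDerivAt F (f u) u)
    (hv_loc : ∀ x : ℝ, 0 < x → ∃ M, ∀ u ∈ Set.Icc (0:ℝ) x, |v u| ≤ M)
    (hm_loc : ∀ x : ℝ, 0 < x → ∃ M, ∀ u ∈ Set.Icc (0:ℝ) x, |m u| ≤ M)
    (hm_eq : ∀ u : ℝ, 0 ≤ u →
      m u = φ * (∫ y in (0:ℝ)..u, m (u - y) * f y) + v u)
    -- Condition 1: `Z` has finite variance
    (hZ1 : MeasureTheory.IntegrableOn (fun y => y * f y) (Set.Ioi 0))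
    (hZ2 : MeasureTheory.IntegrableOn (fun y => y ^ 2 * f y) (Set.Ioi 0))
    -- Condition 2: `F, v ∈ C²₀([0,∞))`
    (hF_c : ContinuousOn F (Set.Ici 0)) (hF_cd : ContDiffOn ℝ 2 F (Set.Ioi 0))
    (hF_lim : ∀ k ≤ 2, ∃ L, Tendsto (iteratedDeriv k F) (𝓝[>] (0:ℝ)) (𝓝 L))
    (hv_c : ContinuousOn v (Set.Ici 0)) (hv_cd : ContDiffOn ℝ 2 v (Set.Ioi 0))
    (hv_lim : ∀ k ≤ 2, ∃ L, Tendsto (iteratedDeriv k v) (𝓝[>] (0:ℝ)) (𝓝 L))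
    (f0 f'0 v'0 : ℝ)
    (hf0 : Tendsto f (𝓝[>] (0:ℝ)) (𝓝 f0))
    (hv'0 : Tendsto (deriv v) (𝓝[>] (0:ℝ)) (𝓝 v'0))
    -- Condition 3: `f'` and `v''` belong to `C²([0,∞))`
    (hf_cd3 : ContDiffOn ℝ 3 f (Set.Ioi 0))
    (hf'0 : Tendsto (deriv f) (𝓝[>] (0:ℝ)) (𝓝 f'0))
    (hv_cd4 : ContDiffOn ℝ 4 v (Set.Ioi 0))
    (hv''0 : ∃ L, Tendsto (iteratedDeriv 2 v) (𝓝[>] (0:ℝ)) (𝓝 L))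
    -- Condition 4: `I₀(f'') < ∞` and `I₂(f'') < ∞`
    (h4a : MeasureTheory.IntegrableOn (fun y => |iteratedDeriv 2 f y|) (Set.Ioi 0))
    (h4b : MeasureTheory.IntegrableOn (fun y => y ^ 2 * |iteratedDeriv 2 f y|)
      (Set.Ioi 0))
    -- Condition 5: `‖u² w₁(u)‖ < ∞` and `‖u² w₂(u)‖ < ∞`
    (h5a : ∃ M, ∀ u : ℝ, 0 < u → |u ^ 2 * w1 φ v f u| ≤ M)
    (h5b : ∃ M, ∀ u : ℝ, 0 < u → |u ^ 2 * w2 φ f0 v'0 v f u| ≤ M)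
    -- Condition 6: `‖u² w₁''(u)‖ < ∞` and `‖u² w₂''(u)‖ < ∞`
    (h6a : ∃ M, ∀ u : ℝ, 0 < u → |u ^ 2 * iteratedDeriv 2 (w1 φ v f) u| ≤ M)
    (h6b : ∃ M, ∀ u : ℝ, 0 < u → |u ^ 2 * iteratedDeriv 2 (w2 φ f0 v'0 v f) u| ≤ M) :
    ContDiffOn ℝ 4 m (Set.Ioi 0) ∧
    ∀ B : ℝ≥0∞,
      B = ENNReal.ofReal φ *
            (ENNReal.ofReal ((∫ y in Set.Ioi (0:ℝ), |iteratedDeriv 2 f y|) + |f'0|)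
                * (⨆ u ∈ Set.Ioi (0:ℝ), (‖u ^ 2 * iteratedDeriv 2 m u‖₊ : ℝ≥0∞))
              + 2 * ENNReal.ofReal (∫ y in Set.Ioi (0:ℝ), y * |iteratedDeriv 2 f y|)
                * (⨆ u ∈ Set.Ioi (0:ℝ), (‖u * iteratedDeriv 2 m u‖₊ : ℝ≥0∞))
              + ENNReal.ofReal (∫ y in Set.Ioi (0:ℝ), y ^ 2 * |iteratedDeriv 2 f y|)
                * (⨆ u ∈ Set.Ioi (0:ℝ), (‖iteratedDeriv 2 m u‖₊ : ℝ≥0∞)))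
          + ENNReal.ofReal (φ * f0)
            * (⨆ u ∈ Set.Ioi (0:ℝ), (‖u ^ 2 * iteratedDeriv 3 m u‖₊ : ℝ≥0∞))
          + (⨆ u ∈ Set.Ioi (0:ℝ),
              (‖u ^ 2 * iteratedDeriv 2 (w2 φ f0 v'0 v f) u‖₊ : ℝ≥0∞)) →
      (⨆ u ∈ Set.Ioi (0:ℝ), (‖u ^ 2 * iteratedDeriv 4 m u‖₊ : ℝ≥0∞)) ≤ B ∧ B < ⊤ := by
  have hf_total_abs : ∫ y in Set.Ioi (0 : ℝ), |f y| = 1 :=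
    (setIntegral_congr_fun measurableSet_Ioi fun y hy => abs_of_nonneg (hf_nonneg y hy)).trans
      hf_total
  have hf0_nonneg : 0 ≤ f0 :=
    ge_of_tendsto hf0 (eventually_mem_nhdsWithin.mono hf_nonneg)
  have hφ : |φ| * ∫ y in Set.Ioi (0 : ℝ), |f y| < 1 := by
    rwa [hf_total_abs, mul_one, abs_of_pos hφ0]
  simpa only [abs_of_pos hφ0, abs_of_nonneg (mul_nonneg hφ0.le hf0_nonneg),
    enorm_eq_nnnorm] using
    stmt_13_general φ f v m hf_integrable hφ hm_loc hm_eq hZ2 hv_c f0 f'0 v'0 hf0 hv'0 hf_cd3 hf'0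
      hv_cd4 hv''0 h4a h4b h5b h6b
end

section
/- Let g : [0,∞) → ℝ be continuous, four times continuously differentiable on (0,∞), with sup_{u>0} |g''(u)| < ∞ and sup_{u>0} |u² g^{(4)}(u)| < ∞ (i.e. g ∈ D₁). For t > 0 let L_t* g(u) := E[g(S(⌊tu⌋+1)/t)], where S(n) denotes a Gamma(n,1) random variable (equivalently, L_t* g(u) = ∫₀^∞ g(x) · t^{⌊tu⌋+1} x^{⌊tu⌋} e^{−tx}/⌊tu⌋! dx), and define M_t^{[2]} g by: M_t^{[2]} g(0) = g(0); M_t^{[2]} g(k/t) = 2 L_{2t}* g((2k−1)/(2t)) − L_t* g((k−1)/t) for k = 1, 2, …; and M_t^{[2]} g(u) = (tu − ⌊tu⌋) M_t^{[2]} g((⌊tu⌋+1)/t) + (⌊tu⌋+1 − tu) M_t^{[2]} g(⌊tu⌋/t) for u > 0 not of the form k/t. Then sup_{u ≥ 0} |M_t^{[2]} g(u) − g(u)| ≤ (1/(8t²)) sup_{u>0}|g''(u)| + (1/(6t²)) sup_{u>0}|u g'''(u)| + (9/(16t²)) sup_{u>0}|u² g^{(4)}(u)| < ∞. -/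
open MeasureTheory Filter Topology
open scoped ENNReal

/-- The gamma-type operator `L_t* g(u) = E[g(S(⌊tu⌋+1)/t)]
= ∫₀^∞ g(x) t^{⌊tu⌋+1} x^{⌊tu⌋} e^{-tx}/⌊tu⌋! dx`. -/
noncomputable def Lstar (t : ℝ) (g : ℝ → ℝ) (u : ℝ) : ℝ :=
  ∫ x in Set.Ioi (0:ℝ),
    g x * (t ^ (⌊t * u⌋₊ + 1) * x ^ ⌊t * u⌋₊ * Real.exp (-t * x)
      / ((⌊t * u⌋₊).factorial : ℝ))

/-- The accelerated approximation on the grid `{k/t : k ∈ ℕ}`: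
`M_t^{[2]} g(0) = g(0)` and
`M_t^{[2]} g(k/t) = 2 L_{2t}* g((2k-1)/(2t)) - L_t* g((k-1)/t)` for `k ≥ 1`. -/
noncomputable def Mgrid (t : ℝ) (g : ℝ → ℝ) : ℕ → ℝ
  | 0 => g 0
  | k + 1 => 2 * Lstar (2 * t) g ((2 * (k : ℝ) + 1) / (2 * t))
      - Lstar t g ((k : ℝ) / t)

/-- The accelerated approximation `M_t^{[2]} g`, extended from the grid by linear
interpolation: `M_t^{[2]} g(u) = (tu - ⌊tu⌋) M_t^{[2]} g((⌊tu⌋+1)/t)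
  + (⌊tu⌋+1 - tu) M_t^{[2]} g(⌊tu⌋/t)` (this formula also reproduces the grid
values when `tu ∈ ℕ`). -/
noncomputable def Mt2 (t : ℝ) (g : ℝ → ℝ) (u : ℝ) : ℝ :=
  (t * u - (⌊t * u⌋₊ : ℝ)) * Mgrid t g (⌊t * u⌋₊ + 1)
    + ((⌊t * u⌋₊ : ℝ) + 1 - t * u) * Mgrid t g ⌊t * u⌋₊

/-!
As a function of its base point `x`, the cubic Taylor remainder of `f` at `y` has the derivative
`-(y - x)³ f⁗(x) / 6`. A sign comparison of first derivatives therefore bounds it by `K` times any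
function of `x` that vanishes at `x = y` and moves away from there at least as fast as
`|y - x|³ / (6 x²)`, where `K = sup |x² f⁗(x)|`. A quartic polynomial in `y` serves, and its
expectation under a gamma law is explicit: for `X ~ Gamma(a, r)` with mean `x = a / r`, the
expectation of `f X` is `f(x) + a f''(x) / (2r²) + a f'''(x) / (3r³)` up to `K / (3r²)`.

At the grid point `(k + 1) / t` the operator is `2 E[g(Y)] - E[g(X)]` with `X ~ Gamma(k + 1, t)` and
`Y ~ Gamma(2(k + 1), 2t)`. These have the same mean and `Y` has half the variance of `X`, so the
second-order terms cancel, leaving `-x g'''(x) / (6t²)` and `K (2/12 + 1/3) / t²`: the argument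
gives `1/2` in place of `9/16`. Off the grid, linear interpolation costs another
`sup |g''| / (8t²)`.
-/

section Taylor

open scoped Nat

theorem apply_le_of_deriv_mul_sub_nonneg {s : Set ℝ} (hs : Convex ℝ s) {f f' : ℝ → ℝ} {x y : ℝ}
    (hx : x ∈ s) (hy : y ∈ s) (hf : ∀ w ∈ s, HasDerivWithinAt f (f' w) s w)
    (hf' : ∀ w ∈ s, 0 ≤ f' w * (w - y)) : f y ≤ f x := by
  have hcont : ContinuousOn f s := fun w hw => (hf w hw).continuousWithinAt
  rcases le_total y x with hyx | hxy
  · have hsub : Set.Icc y x ⊆ s := hs.ordConnected.out hy hx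
    refine monotoneOn_of_hasDerivWithinAt_nonneg (f' := f') (convex_Icc y x) (hcont.mono hsub)
      (fun w hw => (hf w (hsub (interior_subset hw))).mono (interior_subset.trans hsub))
      (fun w hw => ?_) (Set.left_mem_Icc.2 hyx) (Set.right_mem_Icc.2 hyx) hyx
    have hyw : y < w := (interior_Icc.subset hw).1
    exact nonneg_of_mul_nonneg_left (hf' w (hsub (interior_subset hw))) (sub_pos.2 hyw)
  · have hsub : Set.Icc x y ⊆ s := hs.ordConnected.out hx hy
    refine antitoneOn_of_hasDerivWithinAt_nonpos (f' := f') (convex_Icc x y) (hcont.mono hsub)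
      (fun w hw => (hf w (hsub (interior_subset hw))).mono (interior_subset.trans hsub))
      (fun w hw => ?_) (Set.left_mem_Icc.2 hxy) (Set.right_mem_Icc.2 hxy) hxy
    have hwy : w < y := (interior_Icc.subset hw).2
    exact nonpos_of_mul_nonneg_left (hf' w (hsub (interior_subset hw))) (sub_neg.2 hwy)

theorem abs_sub_taylorWithinEval_le_of_deriv {s : Set ℝ} (hs : Convex ℝ s)
    (hs' : UniqueDiffOn ℝ s) {n : ℕ} {f : ℝ → ℝ} (hf : ContDiffOn ℝ (n + 1) f s)
    {M M' : ℝ → ℝ} {x y : ℝ} (hx : x ∈ s) (hy : y ∈ s)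
    (hM : ∀ w ∈ s, HasDerivWithinAt M (M' w) s w) (hMy : M y = 0)
    (hM' : ∀ w ∈ s, |((n ! : ℝ)⁻¹ * (y - w) ^ n) * iteratedDerivWithin (n + 1) f s w * (w - y)|
      ≤ M' w * (w - y)) :
    |f y - taylorWithinEval f n s x y| ≤ M x := by
  have hT : ∀ w ∈ s, HasDerivWithinAt (fun w => f y - taylorWithinEval f n s w y)
      (-(((n ! : ℝ)⁻¹ * (y - w) ^ n) * iteratedDerivWithin (n + 1) f s w)) s w := fun w hw =>
    (hasDerivWithinAt_taylorWithinEval hs' self_mem_nhdsWithin hw subset_rfl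
      (hf.of_le (by exact_mod_cast n.le_succ))
      (hf.differentiableOn_iteratedDerivWithin (by exact_mod_cast n.lt_succ_self) hs' w
        hw)).const_sub (f y)
  have hupper := apply_le_of_deriv_mul_sub_nonneg hs hx hy (fun w hw => (hM w hw).sub (hT w hw))
    fun w hw => by linarith [(abs_le.1 (hM' w hw)).1]
  have hlower := apply_le_of_deriv_mul_sub_nonneg hs hx hy (fun w hw => (hM w hw).add (hT w hw))
    fun w hw => by linarith [(abs_le.1 (hM' w hw)).2]
  simp only [Pi.sub_apply, Pi.add_apply, hMy, taylorWithinEval_self, sub_self, add_zero]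
    at hupper hlower
  exact abs_le.2 ⟨by linarith, by linarith⟩

/-- A polynomial in `y` dominating the integral `∫_x^y (y - w)³ / (6 w²) dw`, the worst cubic Taylor
remainder at base point `x` of a function with `|w² f⁗(w)| ≤ 1`. The parameter `c` balances the
quadratic term against the quartic one: `c → ∞` gives `(y - x)⁴ / (12 x²)`. -/
noncomputable def remainderMajorant (c x y : ℝ) : ℝ :=
  ((y - x) ^ 2 / 4 + (1 - 2 * c) / (6 * x) * (y - x) ^ 3 + c ^ 2 / (4 * x ^ 2) * (y - x) ^ 4)
    / ((1 + c) * (1 + 3 * c))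

theorem remainderMajorant_self (c x : ℝ) : remainderMajorant c x x = 0 := by
  simp [remainderMajorant]

theorem hasDerivAt_remainderMajorant {c x : ℝ} (hc : 0 ≤ c) (hx : x ≠ 0) (y : ℝ) :
    HasDerivAt (fun w => remainderMajorant c w y)
      (-((y - x) ^ 3 / (6 * x ^ 2)
        + (y - x) * y * (x - c * (y - x)) ^ 2 / (2 * x ^ 3 * ((1 + c) * (1 + 3 * c))))) x := by
  have hsub : HasDerivAt (fun w => y - w) (-1) x := (hasDerivAt_id x).const_sub y
  have hcubic : HasDerivAt (fun w => (1 - 2 * c) / (6 * w)) _ x :=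
    (hasDerivAt_const x _).fun_div ((hasDerivAt_id' x).const_mul 6) (by positivity)
  have hquartic : HasDerivAt (fun w => c ^ 2 / (4 * w ^ 2)) _ x :=
    (hasDerivAt_const x _).fun_div ((hasDerivAt_pow 2 x).const_mul 4) (by positivity)
  have h := ((((hsub.fun_pow 2).div_const 4).fun_add (hcubic.fun_mul (hsub.fun_pow 3))).fun_add
    (hquartic.fun_mul (hsub.fun_pow 4))).div_const ((1 + c) * (1 + 3 * c))
  refine h.congr_deriv ?_
  field_simp
  ring

theorem abs_sub_taylorWithinEval_three_le {f : ℝ → ℝ} (hf : ContDiffOn ℝ 4 f (Set.Ioi 0)) {K : ℝ}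
    (hK : ∀ w ∈ Set.Ioi (0 : ℝ), |w ^ 2 * iteratedDeriv 4 f w| ≤ K) {c x y : ℝ} (hc : 0 ≤ c)
    (hx : 0 < x) (hy : 0 < y) :
    |f y - taylorWithinEval f 3 (Set.Ioi 0) x y| ≤ K * remainderMajorant c x y := by
  refine abs_sub_taylorWithinEval_le_of_deriv (convex_Ioi 0) (uniqueDiffOn_Ioi 0) hf hx hy
    (M := fun w => K * remainderMajorant c w y)
    (fun w hw => ((hasDerivAt_remainderMajorant hc hw.ne' y).const_mul K).hasDerivWithinAt)
    (by simp [remainderMajorant_self]) fun w hw => ?_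
  have hw : 0 < w := hw
  have hK₀ : 0 ≤ K := (abs_nonneg _).trans (hK w hw)
  rw [iteratedDerivWithin_of_isOpen isOpen_Ioi hw]
  calc |((Nat.factorial 3 : ℝ)⁻¹ * (y - w) ^ 3) * iteratedDeriv 4 f w * (w - y)|
      = |(y - w) ^ 4 / (6 * w ^ 2) * (w ^ 2 * iteratedDeriv 4 f w)| := by
        rw [← abs_neg]
        congr 1
        simp only [Nat.factorial]
        push_cast
        field_simp
        ring
    _ = (y - w) ^ 4 / (6 * w ^ 2) * |w ^ 2 * iteratedDeriv 4 f w| := by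
        rw [abs_mul, abs_of_nonneg (by positivity)]
    _ ≤ (y - w) ^ 4 / (6 * w ^ 2) * K := by gcongr; exact hK w hw
    _ ≤ (y - w) ^ 4 / (6 * w ^ 2) * K + K * ((y - w) ^ 2 * y * (w - c * (y - w)) ^ 2
          / (2 * w ^ 3 * ((1 + c) * (1 + 3 * c)))) := le_add_of_nonneg_right (by positivity)
    _ = _ := by ring

end Taylor

section GammaMoments

open ProbabilityTheory Real

variable {a r : ℝ}

theorem ae_pos_gammaMeasure (a r : ℝ) : ∀ᵐ x ∂gammaMeasure a r, 0 < x := by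
  have hmeas : Measurable (gammaPDF a r) := (measurable_gammaPDFReal a r).ennreal_ofReal
  rw [gammaMeasure, ae_withDensity_iff hmeas]
  filter_upwards [Measure.ae_ne volume 0] with x hx₀ hpdf
  exact (not_lt.1 fun hneg => hpdf (gammaPDF_of_neg hneg)).lt_of_ne' hx₀

theorem integral_gammaMeasure (ha : 0 < a) (hr : 0 < r) (f : ℝ → ℝ) :
    ∫ x, f x ∂gammaMeasure a r = ∫ x in Set.Ioi 0, f x * gammaPDFReal a r x := by
  have hmeas : Measurable (gammaPDF a r) := (measurable_gammaPDFReal a r).ennreal_ofReal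
  rw [← Measure.restrict_eq_self_of_ae_mem (s := Set.Ioi 0) (ae_pos_gammaMeasure a r), gammaMeasure,
    restrict_withDensity measurableSet_Ioi,
    integral_withDensity_eq_integral_toReal_smul hmeas (ae_of_all _ fun x => ENNReal.ofReal_lt_top)]
  simp only [gammaPDF, ENNReal.toReal_ofReal (gammaPDFReal_nonneg ha hr _), smul_eq_mul, mul_comm]

theorem pow_mul_gammaPDFReal (ha : 0 < a) (hr : 0 < r) (n : ℕ) {x : ℝ} (hx : 0 < x) :
    x ^ n * gammaPDFReal a r x
      = Gamma (a + n) / (Gamma a * r ^ n) * gammaPDFReal (a + n) r x := by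
  have hΓ : Gamma (a + n) ≠ 0 := (Gamma_pos_of_pos (by positivity)).ne'
  simp only [gammaPDFReal, if_pos hx.le, add_sub_right_comm a, rpow_add hx, rpow_add hr,
    rpow_natCast]
  field_simp

theorem integral_pow_gammaMeasure (ha : 0 < a) (hr : 0 < r) (n : ℕ) :
    ∫ x, x ^ n ∂gammaMeasure a r = Gamma (a + n) / (Gamma a * r ^ n) := by
  have han : 0 < a + n := by positivity
  have := isProbabilityMeasure_gammaMeasure han hr
  have hmass : ∫ x in Set.Ioi 0, gammaPDFReal (a + n) r x = 1 := by
    simpa using (integral_gammaMeasure han hr fun _ => 1).symm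
  rw [integral_gammaMeasure ha hr, setIntegral_congr_fun measurableSet_Ioi
    fun x hx => pow_mul_gammaPDFReal ha hr n hx, integral_const_mul, hmass, mul_one]

theorem integrable_pow_gammaMeasure (ha : 0 < a) (hr : 0 < r) (n : ℕ) :
    Integrable (fun x => x ^ n) (gammaMeasure a r) := by
  refine Integrable.of_integral_ne_zero ?_
  rw [integral_pow_gammaMeasure ha hr]
  have := Gamma_pos_of_pos (show 0 < a + n by positivity)
  positivity

theorem integrable_sub_pow_gammaMeasure (ha : 0 < a) (hr : 0 < r) (x : ℝ) (n : ℕ) :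
    Integrable (fun y => (y - x) ^ n) (gammaMeasure a r) := by
  simp only [sub_eq_add_neg, add_pow]
  exact integrable_finsetSum _ fun m _ =>
    ((integrable_pow_gammaMeasure ha hr m).mul_const _).mul_const _

theorem integral_sub_pow_gammaMeasure (ha : 0 < a) (hr : 0 < r) (x : ℝ) (n : ℕ) :
    ∫ y, (y - x) ^ n ∂gammaMeasure a r = ∑ m ∈ Finset.range (n + 1),
      Gamma (a + m) / (Gamma a * r ^ m) * (-x) ^ (n - m) * n.choose m := by
  simp only [sub_eq_add_neg, add_pow]
  rw [integral_finsetSum _ fun m _ =>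
    ((integrable_pow_gammaMeasure ha hr m).mul_const _).mul_const _]
  simp only [integral_mul_const, integral_pow_gammaMeasure ha hr]

theorem Gamma_add_natCast_succ (ha : 0 < a) (n : ℕ) :
    Gamma (a + (n + 1 : ℕ)) = (a + n) * Gamma (a + n) := by
  rw [Nat.cast_succ, ← add_assoc, Gamma_add_one (by positivity)]

theorem integral_sub_mean_gammaMeasure (ha : 0 < a) (hr : 0 < r) :
    ∫ y, (y - a / r) ∂gammaMeasure a r = 0 := by
  have hΓ : Gamma a ≠ 0 := (Gamma_pos_of_pos ha).ne'
  have h := integral_sub_pow_gammaMeasure ha hr (a / r) 1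
  simp only [pow_one, Finset.sum_range_succ, Finset.sum_range_zero,
    Gamma_add_natCast_succ ha, Nat.cast_zero, add_zero] at h
  rw [h]
  simp only [Nat.choose, Nat.reduceAdd, Nat.reduceSub]
  push_cast
  field_simp
  ring

theorem integral_sub_mean_sq_gammaMeasure (ha : 0 < a) (hr : 0 < r) :
    ∫ y, (y - a / r) ^ 2 ∂gammaMeasure a r = a / r ^ 2 := by
  have hΓ : Gamma a ≠ 0 := (Gamma_pos_of_pos ha).ne'
  simp only [integral_sub_pow_gammaMeasure ha hr, Finset.sum_range_succ, Finset.sum_range_zero,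
    Gamma_add_natCast_succ ha, Nat.cast_zero, add_zero]
  simp only [Nat.choose, Nat.reduceAdd, Nat.reduceSub]
  push_cast
  field_simp
  ring

theorem integral_sub_mean_pow_three_gammaMeasure (ha : 0 < a) (hr : 0 < r) :
    ∫ y, (y - a / r) ^ 3 ∂gammaMeasure a r = 2 * a / r ^ 3 := by
  have hΓ : Gamma a ≠ 0 := (Gamma_pos_of_pos ha).ne'
  simp only [integral_sub_pow_gammaMeasure ha hr, Finset.sum_range_succ, Finset.sum_range_zero,
    Gamma_add_natCast_succ ha, Nat.cast_zero, add_zero]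
  simp only [Nat.choose, Nat.reduceAdd, Nat.reduceSub]
  push_cast
  field_simp
  ring

theorem integral_sub_mean_pow_four_gammaMeasure (ha : 0 < a) (hr : 0 < r) :
    ∫ y, (y - a / r) ^ 4 ∂gammaMeasure a r = 3 * a * (a + 2) / r ^ 4 := by
  have hΓ : Gamma a ≠ 0 := (Gamma_pos_of_pos ha).ne'
  simp only [integral_sub_pow_gammaMeasure ha hr, Finset.sum_range_succ, Finset.sum_range_zero,
    Gamma_add_natCast_succ ha, Nat.cast_zero, add_zero]
  simp only [Nat.choose, Nat.reduceAdd, Nat.reduceSub]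
  push_cast
  field_simp
  ring

end GammaMoments

section GammaTaylor

open ProbabilityTheory

open scoped Nat

variable {a r : ℝ}

theorem integrable_taylorWithinEval_gammaMeasure (ha : 0 < a) (hr : 0 < r) (f : ℝ → ℝ) (n : ℕ)
    (s : Set ℝ) (x : ℝ) :
    Integrable (fun y => taylorWithinEval f n s x y) (gammaMeasure a r) := by
  simp only [taylor_within_apply]
  exact integrable_finsetSum _ fun k _ =>
    ((integrable_sub_pow_gammaMeasure ha hr x k).const_mul _).smul_const _

theorem integral_taylorWithinEval_gammaMeasure (ha : 0 < a) (hr : 0 < r) (f : ℝ → ℝ) (n : ℕ)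
    (s : Set ℝ) (x : ℝ) :
    ∫ y, taylorWithinEval f n s x y ∂gammaMeasure a r = ∑ k ∈ Finset.range (n + 1),
      (k ! : ℝ)⁻¹ * (∫ y, (y - x) ^ k ∂gammaMeasure a r) * iteratedDerivWithin k f s x := by
  simp only [taylor_within_apply, smul_eq_mul]
  rw [integral_finsetSum _ fun k _ =>
    ((integrable_sub_pow_gammaMeasure ha hr x k).const_mul _).mul_const _]
  simp only [integral_mul_const, integral_const_mul]

theorem integral_taylorWithinEval_three_gammaMeasure (ha : 0 < a) (hr : 0 < r) (f : ℝ → ℝ) :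
    ∫ y, taylorWithinEval f 3 (Set.Ioi 0) (a / r) y ∂gammaMeasure a r
      = f (a / r) + a / (2 * r ^ 2) * iteratedDeriv 2 f (a / r)
        + a / (3 * r ^ 3) * iteratedDeriv 3 f (a / r) := by
  have := isProbabilityMeasure_gammaMeasure ha hr
  have hmean : a / r ∈ Set.Ioi (0 : ℝ) := div_pos ha hr
  simp only [integral_taylorWithinEval_gammaMeasure ha hr, Finset.sum_range_succ,
    Finset.sum_range_zero, iteratedDerivWithin_of_isOpen isOpen_Ioi hmean, iteratedDeriv_zero,
    pow_zero, pow_one, integral_const, probReal_univ, integral_sub_mean_gammaMeasure ha hr,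
    integral_sub_mean_sq_gammaMeasure ha hr, integral_sub_mean_pow_three_gammaMeasure ha hr,
    Nat.factorial, smul_eq_mul]
  push_cast
  ring

theorem integrable_remainderMajorant_gammaMeasure (ha : 0 < a) (hr : 0 < r) (c x : ℝ) :
    Integrable (fun y => remainderMajorant c x y) (gammaMeasure a r) := by
  have hpow := integrable_sub_pow_gammaMeasure ha hr x
  exact ((((hpow 2).div_const _).add ((hpow 3).const_mul _)).add ((hpow 4).const_mul _)).div_const _

theorem integral_remainderMajorant_gammaMeasure (ha : 0 < a) (hr : 0 < r) :
    ∫ y, remainderMajorant a (a / r) y ∂gammaMeasure a r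
      = (9 * a + 4) / (12 * (1 + 3 * a) * r ^ 2) := by
  have hpow := integrable_sub_pow_gammaMeasure ha hr (a / r)
  simp only [remainderMajorant, integral_div]
  rw [integral_add (((hpow 2).div_const _).fun_add ((hpow 3).const_mul _)) ((hpow 4).const_mul _),
    integral_add ((hpow 2).div_const _) ((hpow 3).const_mul _), integral_div, integral_const_mul,
    integral_const_mul, integral_sub_mean_sq_gammaMeasure ha hr,
    integral_sub_mean_pow_three_gammaMeasure ha hr, integral_sub_mean_pow_four_gammaMeasure ha hr]
  field_simp
  ring

theorem abs_integral_gammaMeasure_sub_le {f : ℝ → ℝ} (hf : ContDiffOn ℝ 4 f (Set.Ioi 0)) {K : ℝ}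
    (hK : ∀ w ∈ Set.Ioi (0 : ℝ), |w ^ 2 * iteratedDeriv 4 f w| ≤ K) (ha : 0 < a) (hr : 0 < r) :
    |∫ y, f y ∂gammaMeasure a r - (f (a / r) + a / (2 * r ^ 2) * iteratedDeriv 2 f (a / r)
        + a / (3 * r ^ 3) * iteratedDeriv 3 f (a / r))| ≤ K / (3 * r ^ 2) := by
  set T := taylorWithinEval f 3 (Set.Ioi 0) (a / r)
  have hK₀ : 0 ≤ K := (abs_nonneg _).trans (hK 1 (Set.mem_Ioi.2 one_pos))
  have hT := integrable_taylorWithinEval_gammaMeasure ha hr f 3 (Set.Ioi 0) (a / r)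
  have hmajorant := (integrable_remainderMajorant_gammaMeasure ha hr a (a / r)).const_mul K
  have hle : ∀ᵐ y ∂gammaMeasure a r, ‖f y - T y‖ ≤ K * remainderMajorant a (a / r) y := by
    filter_upwards [ae_pos_gammaMeasure a r] with y hy
    exact abs_sub_taylorWithinEval_three_le hf hK ha.le (div_pos ha hr) hy
  have hmeas : AEStronglyMeasurable f (gammaMeasure a r) := by
    rw [← Measure.restrict_eq_self_of_ae_mem (s := Set.Ioi 0) (ae_pos_gammaMeasure a r)]
    exact hf.continuousOn.aestronglyMeasurable measurableSet_Ioi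
  have hrem : Integrable (fun y => f y - T y) (gammaMeasure a r) :=
    hmajorant.mono' (hmeas.sub hT.aestronglyMeasurable) hle
  have hint : Integrable f (gammaMeasure a r) :=
    (hrem.fun_add hT).congr (ae_of_all _ fun y => sub_add_cancel (f y) (T y))
  rw [← integral_taylorWithinEval_three_gammaMeasure ha hr, ← integral_sub hint hT]
  calc |∫ y, f y - T y ∂gammaMeasure a r|
      ≤ ∫ y, K * remainderMajorant a (a / r) y ∂gammaMeasure a r :=
        norm_integral_le_of_norm_le hmajorant hle
    _ = K * ((9 * a + 4) / (12 * (1 + 3 * a) * r ^ 2)) := by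
        rw [integral_const_mul, integral_remainderMajorant_gammaMeasure ha hr]
    _ ≤ K * (1 / (3 * r ^ 2)) := by
        refine mul_le_mul_of_nonneg_left ?_ hK₀
        rw [div_le_div_iff₀ (by positivity) (by positivity)]
        nlinarith [sq_pos_of_pos hr, mul_pos ha (sq_pos_of_pos hr)]
    _ = K / (3 * r ^ 2) := by ring

end GammaTaylor

section Interpolation

theorem hasDerivAt_iteratedDeriv_of_contDiffOn {f : ℝ → ℝ} {s : Set ℝ} (hs : IsOpen s) {n : ℕ}
    (hf : ContDiffOn ℝ (n + 1) f s) {u : ℝ} (hu : u ∈ s) :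
    HasDerivAt (iteratedDeriv n f) (iteratedDeriv (n + 1) f u) u := by
  have hdiff := hf.differentiableOn_iteratedDerivWithin (by exact_mod_cast n.lt_succ_self)
    hs.uniqueDiffOn
  rw [iteratedDeriv_succ]
  exact ((hdiff.congr fun w hw => (iteratedDerivWithin_of_isOpen hs hw).symm).differentiableAt
    (hs.mem_nhds hu)).hasDerivAt

theorem strongConvexOn_of_hasDerivAt2_ge {D : Set ℝ} (hD : Convex ℝ D) {f f' f'' : ℝ → ℝ} {m : ℝ}
    (hf : ContinuousOn f D) (hf' : ∀ x ∈ interior D, HasDerivAt f (f' x) x)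
    (hf'' : ∀ x ∈ interior D, HasDerivAt f' (f'' x) x) (hm : ∀ x ∈ interior D, m ≤ f'' x) :
    StrongConvexOn D m f := by
  simp only [strongConvexOn_iff_convex, Real.norm_eq_abs, sq_abs]
  refine convexOn_of_hasDerivWithinAt2_nonneg hD (f' := fun x => f' x - m * x)
    (f'' := fun x => f'' x - m) (hf.sub (by fun_prop)) (fun x hx => ?_) (fun x hx => ?_)
    fun x hx => sub_nonneg.2 (hm x hx)
  · refine ((hf' x hx).sub ((hasDerivAt_pow 2 x).const_mul (m / 2))).hasDerivWithinAt.congr_deriv ?_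
    ring
  · simpa using! ((hf'' x hx).sub ((hasDerivAt_id x).const_mul m)).hasDerivWithinAt

theorem abs_convexCombination_sub_le {D : Set ℝ} (hD : Convex ℝ D) {f f' f'' : ℝ → ℝ} {K : ℝ}
    (hf : ContinuousOn f D) (hf' : ∀ x ∈ interior D, HasDerivAt f (f' x) x)
    (hf'' : ∀ x ∈ interior D, HasDerivAt f' (f'' x) x) (hK : ∀ x ∈ interior D, |f'' x| ≤ K)
    {x y a b : ℝ} (hx : x ∈ D) (hy : y ∈ D) (ha : 0 ≤ a) (hb : 0 ≤ b) (hab : a + b = 1) :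
    |a * f x + b * f y - f (a * x + b * y)| ≤ a * b * (K / 2 * (x - y) ^ 2) := by
  have hconvex : StrongConvexOn D (-K) f :=
    strongConvexOn_of_hasDerivAt2_ge hD hf hf' hf'' fun x hx => (abs_le.1 (hK x hx)).1
  have hconcave : StrongConvexOn D (-K) (-f) :=
    strongConvexOn_of_hasDerivAt2_ge hD hf.neg (fun x hx => (hf' x hx).neg)
      (fun x hx => (hf'' x hx).neg) fun x hx => neg_le_neg (abs_le.1 (hK x hx)).2
  have hlower := hconvex.2 hx hy ha hb hab
  have hupper := hconcave.2 hx hy ha hb hab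
  simp only [smul_eq_mul, Pi.neg_apply, Real.norm_eq_abs, sq_abs] at hlower hupper
  exact abs_le.2 ⟨by linarith, by linarith⟩

theorem abs_mul_deriv_le {f f' f'' : ℝ → ℝ} {A B : ℝ}
    (hf : ∀ u ∈ Set.Ioi (0 : ℝ), HasDerivAt f (f' u) u)
    (hf' : ∀ u ∈ Set.Ioi (0 : ℝ), HasDerivAt f' (f'' u) u)
    (hA : ∀ u ∈ Set.Ioi (0 : ℝ), |f u| ≤ A) (hB : ∀ u ∈ Set.Ioi (0 : ℝ), |u ^ 2 * f'' u| ≤ B) :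
    ∀ u ∈ Set.Ioi (0 : ℝ), |u * f' u| ≤ 2 * A + B := by
  intro u hu
  have hu : 0 < u := hu
  have hderiv : ∀ w ∈ Set.Icc u (2 * u), HasDerivWithinAt (fun w => f w + (2 * u - w) * f' w)
      ((2 * u - w) * f'' w) (Set.Icc u (2 * u)) w := fun w hw => by
    have hw₀ : 0 < w := hu.trans_le hw.1
    refine ((hf w hw₀).fun_add (((hasDerivAt_id' w).const_sub (2 * u)).fun_mul
      (hf' w hw₀))).hasDerivWithinAt.congr_deriv ?_
    ring
  have hbound : ∀ w ∈ Set.Icc u (2 * u), ‖(2 * u - w) * f'' w‖ ≤ B / u := fun w hw => by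
    have hw₀ : 0 < w := hu.trans_le hw.1
    have hfB := hB w hw₀
    rw [abs_mul, abs_of_pos (by positivity)] at hfB
    rw [norm_mul, Real.norm_eq_abs, Real.norm_eq_abs, abs_of_nonneg (by linarith [hw.2]),
      le_div_iff₀ hu]
    calc (2 * u - w) * |f'' w| * u = u * (2 * u - w) * |f'' w| := by ring
      _ ≤ w ^ 2 * |f'' w| := by gcongr; nlinarith [hw.1]
      _ ≤ B := hfB
  have hrem := (convex_Icc u (2 * u)).norm_image_sub_le_of_norm_hasDerivWithin_le hderiv hbound
    (Set.left_mem_Icc.2 (by linarith)) (Set.right_mem_Icc.2 (by linarith))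
  have hrem' : |f (2 * u) - (f u + u * f' u)| ≤ B := by
    convert! hrem using 1
    · rw [Real.norm_eq_abs]; ring_nf
    · rw [Real.norm_eq_abs, show 2 * u - u = u by ring, abs_of_pos hu, div_mul_cancel₀ _ hu.ne']
  have hfu := abs_le.1 (hA u hu)
  have hf2u := abs_le.1 (hA (2 * u) (by simpa using hu))
  rw [abs_le] at hrem' ⊢
  constructor <;> linarith

end Interpolation

section Approximation

open ProbabilityTheory

theorem Lstar_eq_integral_gammaMeasure {t : ℝ} (ht : 0 < t) (g : ℝ → ℝ) (u : ℝ) :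
    Lstar t g u = ∫ x, g x ∂gammaMeasure (⌊t * u⌋₊ + 1) t := by
  rw [integral_gammaMeasure (by positivity) ht, Lstar]
  refine setIntegral_congr_fun measurableSet_Ioi fun x hx => ?_
  have hx : 0 < x := hx
  simp only [gammaPDFReal, if_pos hx.le, add_sub_cancel_right, Real.Gamma_nat_eq_factorial,
    Real.rpow_add_one ht.ne', Real.rpow_natCast, pow_succ, neg_mul]
  ring

theorem Lstar_natCast_div {t : ℝ} (ht : 0 < t) (g : ℝ → ℝ) (n : ℕ) :
    Lstar t g (n / t) = ∫ x, g x ∂gammaMeasure (n + 1) t := by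
  rw [Lstar_eq_integral_gammaMeasure ht, mul_div_cancel₀ _ ht.ne', Nat.floor_natCast]

theorem Mgrid_succ_eq {t : ℝ} (ht : 0 < t) (g : ℝ → ℝ) (k : ℕ) :
    Mgrid t g (k + 1) = 2 * ∫ x, g x ∂gammaMeasure (2 * (k + 1)) (2 * t)
      - ∫ x, g x ∂gammaMeasure (k + 1) t := by
  have h := Lstar_natCast_div (mul_pos two_pos ht) g (2 * k + 1)
  push_cast at h
  rw [Mgrid, h, Lstar_natCast_div ht, show (2 * k + 1 + 1 : ℝ) = 2 * (k + 1) by ring]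

section Bounds

variable {g : ℝ → ℝ} {K₂ K₃ K₄ t : ℝ}

theorem abs_Mgrid_succ_sub_le (hg : ContDiffOn ℝ 4 g (Set.Ioi 0))
    (hK₃ : ∀ u ∈ Set.Ioi (0 : ℝ), |u * iteratedDeriv 3 g u| ≤ K₃)
    (hK₄ : ∀ u ∈ Set.Ioi (0 : ℝ), |u ^ 2 * iteratedDeriv 4 g u| ≤ K₄) (ht : 0 < t) (k : ℕ) :
    |Mgrid t g (k + 1) - g ((k + 1) / t)| ≤ 1 / (6 * t ^ 2) * K₃ + 1 / (2 * t ^ 2) * K₄ := by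
  have hk : (0 : ℝ) < k + 1 := by positivity
  set x : ℝ := (k + 1) / t with hx
  have hmean : 2 * (k + 1) / (2 * t) = x := by rw [hx]; field_simp
  have hcoarse := abs_integral_gammaMeasure_sub_le hg hK₄ hk ht
  have hfine := abs_integral_gammaMeasure_sub_le hg hK₄ (mul_pos two_pos hk) (mul_pos two_pos ht)
  rw [hmean] at hfine
  rw [← hx] at hcoarse
  have hthird : |1 / (6 * t ^ 2) * (x * iteratedDeriv 3 g x)| ≤ 1 / (6 * t ^ 2) * K₃ := by
    rw [abs_mul, abs_of_nonneg (by positivity)]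
    gcongr
    exact hK₃ x (div_pos hk ht)
  set fineError := ∫ y, g y ∂gammaMeasure (2 * (k + 1)) (2 * t)
    - (g x + 2 * (k + 1) / (2 * (2 * t) ^ 2) * iteratedDeriv 2 g x
      + 2 * (k + 1) / (3 * (2 * t) ^ 3) * iteratedDeriv 3 g x) with hfineError
  set coarseError := ∫ y, g y ∂gammaMeasure (k + 1) t
    - (g x + (k + 1) / (2 * t ^ 2) * iteratedDeriv 2 g x
      + (k + 1) / (3 * t ^ 3) * iteratedDeriv 3 g x) with hcoarseError
  calc |Mgrid t g (k + 1) - g x|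
      = |2 * fineError - coarseError - 1 / (6 * t ^ 2) * (x * iteratedDeriv 3 g x)| := by
        congr 1
        rw [Mgrid_succ_eq ht, hfineError, hcoarseError,
          show x * iteratedDeriv 3 g x = (k + 1) / t * iteratedDeriv 3 g x from rfl]
        field_simp
        ring
    _ ≤ 2 * |fineError| + |coarseError| + |1 / (6 * t ^ 2) * (x * iteratedDeriv 3 g x)| := by
        grw [abs_sub, abs_sub, abs_mul, abs_two]
    _ ≤ 2 * (K₄ / (3 * (2 * t) ^ 2)) + K₄ / (3 * t ^ 2) + 1 / (6 * t ^ 2) * K₃ := by gcongr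
    _ = 1 / (6 * t ^ 2) * K₃ + 1 / (2 * t ^ 2) * K₄ := by field_simp; ring

theorem abs_Mgrid_sub_le (hg : ContDiffOn ℝ 4 g (Set.Ioi 0))
    (hK₃ : ∀ u ∈ Set.Ioi (0 : ℝ), |u * iteratedDeriv 3 g u| ≤ K₃)
    (hK₄ : ∀ u ∈ Set.Ioi (0 : ℝ), |u ^ 2 * iteratedDeriv 4 g u| ≤ K₄) (ht : 0 < t) (k : ℕ) :
    |Mgrid t g k - g (k / t)| ≤ 1 / (6 * t ^ 2) * K₃ + 1 / (2 * t ^ 2) * K₄ := by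
  cases k with
  | zero =>
    have hK₃' : 0 ≤ K₃ := (abs_nonneg _).trans (hK₃ 1 (Set.mem_Ioi.2 one_pos))
    have hK₄' : 0 ≤ K₄ := (abs_nonneg _).trans (hK₄ 1 (Set.mem_Ioi.2 one_pos))
    simp only [Mgrid, Nat.cast_zero, zero_div, sub_self, abs_zero]
    positivity
  | succ k => exact_mod_cast abs_Mgrid_succ_sub_le hg hK₃ hK₄ ht k

theorem abs_gridInterpolation_sub_le (hg₀ : ContinuousOn g (Set.Ici 0))
    (hg : ContDiffOn ℝ 2 g (Set.Ioi 0))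
    (hK₂ : ∀ u ∈ Set.Ioi (0 : ℝ), |iteratedDeriv 2 g u| ≤ K₂) (ht : 0 < t) (k : ℕ) {θ : ℝ}
    (hθ₀ : 0 ≤ θ) (hθ₁ : θ ≤ 1) :
    |θ * g ((k + 1) / t) + (1 - θ) * g (k / t) - g ((k + θ) / t)| ≤ 1 / (8 * t ^ 2) * K₂ := by
  have hK₂' : 0 ≤ K₂ := (abs_nonneg _).trans (hK₂ 1 (Set.mem_Ioi.2 one_pos))
  have hinterp := abs_convexCombination_sub_le (convex_Ici 0) hg₀ (f' := iteratedDeriv 1 g)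
    (f'' := iteratedDeriv 2 g) (K := K₂) (x := (k + 1) / t) (y := k / t) (a := θ) (b := 1 - θ)
    (by simpa only [interior_Ici, iteratedDeriv_zero] using fun u hu =>
      hasDerivAt_iteratedDeriv_of_contDiffOn isOpen_Ioi (n := 0) (hg.of_le (by norm_num)) hu)
    (by simpa only [interior_Ici] using fun u hu =>
      hasDerivAt_iteratedDeriv_of_contDiffOn isOpen_Ioi (n := 1) (hg.of_le (by norm_num)) hu)
    (by simpa only [interior_Ici] using hK₂)
    (Set.mem_Ici.2 (by positivity)) (Set.mem_Ici.2 (by positivity)) hθ₀ (sub_nonneg.2 hθ₁)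
    (add_sub_cancel θ 1)
  rw [show θ * ((k + 1) / t) + (1 - θ) * (k / t) = (k + θ) / t by ring,
    show ((k + 1) / t - k / t : ℝ) = 1 / t by ring] at hinterp
  calc _ ≤ θ * (1 - θ) * (K₂ / 2 * (1 / t) ^ 2) := hinterp
    _ ≤ 1 / 4 * (K₂ / 2 * (1 / t) ^ 2) := by gcongr; nlinarith [sq_nonneg (θ - 1 / 2)]
    _ = 1 / (8 * t ^ 2) * K₂ := by ring

theorem abs_Mt2_sub_le (hg₀ : ContinuousOn g (Set.Ici 0)) (hg : ContDiffOn ℝ 4 g (Set.Ioi 0))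
    (hK₂ : ∀ u ∈ Set.Ioi (0 : ℝ), |iteratedDeriv 2 g u| ≤ K₂)
    (hK₃ : ∀ u ∈ Set.Ioi (0 : ℝ), |u * iteratedDeriv 3 g u| ≤ K₃)
    (hK₄ : ∀ u ∈ Set.Ioi (0 : ℝ), |u ^ 2 * iteratedDeriv 4 g u| ≤ K₄) (ht : 0 < t) {u : ℝ}
    (hu : 0 ≤ u) :
    |Mt2 t g u - g u| ≤ 1 / (8 * t ^ 2) * K₂ + 1 / (6 * t ^ 2) * K₃ + 1 / (2 * t ^ 2) * K₄ := by
  set k := ⌊t * u⌋₊ with hk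
  set θ := t * u - k with hθ
  have hθ₀ : 0 ≤ θ := sub_nonneg.2 (Nat.floor_le (by positivity))
  have hθ₁ : θ ≤ 1 := by linarith [Nat.lt_floor_add_one (t * u)]
  have hu_eq : (k + θ) / t = u := by rw [hθ]; field_simp; ring
  have hinterp := abs_gridInterpolation_sub_le hg₀ (hg.of_le (by norm_num)) hK₂ ht k hθ₀ hθ₁
  have hleft := abs_Mgrid_sub_le hg hK₃ hK₄ ht k
  have hright := abs_Mgrid_succ_sub_le hg hK₃ hK₄ ht k
  rw [hu_eq] at hinterp
  set E := 1 / (6 * t ^ 2) * K₃ + 1 / (2 * t ^ 2) * K₄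
  calc |Mt2 t g u - g u|
      = |(θ * g ((k + 1) / t) + (1 - θ) * g (k / t) - g u)
          + (θ * (Mgrid t g (k + 1) - g ((k + 1) / t)) + (1 - θ) * (Mgrid t g k - g (k / t)))| := by
        rw [Mt2, ← hk, ← hθ, show k + 1 - t * u = 1 - θ by rw [hθ]; ring]
        ring_nf
    _ ≤ |θ * g ((k + 1) / t) + (1 - θ) * g (k / t) - g u|
          + (θ * |Mgrid t g (k + 1) - g ((k + 1) / t)| + (1 - θ) * |Mgrid t g k - g (k / t)|) := by
        grw [abs_add_le, abs_add_le, abs_mul, abs_mul, abs_of_nonneg hθ₀,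
          abs_of_nonneg (sub_nonneg.2 hθ₁)]
    _ ≤ 1 / (8 * t ^ 2) * K₂ + (θ * E + (1 - θ) * E) := by
        gcongr
    _ = 1 / (8 * t ^ 2) * K₂ + 1 / (6 * t ^ 2) * K₃ + 1 / (2 * t ^ 2) * K₄ := by ring

end Bounds

end Approximation

section Supremum

variable {f : ℝ → ℝ} {s : Set ℝ}

theorem biSup_nnnorm_le_ofReal {C : ℝ} (h : ∀ u ∈ s, |f u| ≤ C) :
    (⨆ u ∈ s, (‖f u‖₊ : ℝ≥0∞)) ≤ ENNReal.ofReal C := by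
  refine iSup₂_le fun u hu => ?_
  rw [← enorm_eq_nnnorm, ← ofReal_norm]
  exact ENNReal.ofReal_le_ofReal (h u hu)

theorem abs_le_toReal_biSup_nnnorm (h : (⨆ u ∈ s, (‖f u‖₊ : ℝ≥0∞)) ≠ ⊤) :
    ∀ u ∈ s, |f u| ≤ (⨆ u ∈ s, (‖f u‖₊ : ℝ≥0∞)).toReal := fun u hu => by
  simpa using ENNReal.toReal_mono h (le_iSup₂ (f := fun u (_ : u ∈ s) => (‖f u‖₊ : ℝ≥0∞)) u hu)

theorem biSup_nnnorm_mul_iteratedDeriv_three_ne_top {g : ℝ → ℝ} (hg : ContDiffOn ℝ 4 g (Set.Ioi 0))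
    (hg2 : (⨆ u ∈ Set.Ioi (0 : ℝ), (‖iteratedDeriv 2 g u‖₊ : ℝ≥0∞)) ≠ ⊤)
    (hg4 : (⨆ u ∈ Set.Ioi (0 : ℝ), (‖u ^ 2 * iteratedDeriv 4 g u‖₊ : ℝ≥0∞)) ≠ ⊤) :
    (⨆ u ∈ Set.Ioi (0 : ℝ), (‖u * iteratedDeriv 3 g u‖₊ : ℝ≥0∞)) ≠ ⊤ :=
  ne_top_of_le_ne_top ENNReal.ofReal_ne_top <| biSup_nnnorm_le_ofReal <| abs_mul_deriv_le
    (fun _ => hasDerivAt_iteratedDeriv_of_contDiffOn isOpen_Ioi (hg.of_le (by norm_num)))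
    (fun _ => hasDerivAt_iteratedDeriv_of_contDiffOn isOpen_Ioi (hg.of_le (by norm_num)))
    (abs_le_toReal_biSup_nnnorm hg2) (abs_le_toReal_biSup_nnnorm hg4)

end Supremum

/-- for `g ∈ D₁` (continuous on `[0,∞)`, four times continuously
differentiable on `(0,∞)`, with `‖g''‖ < ∞` and `‖u² g⁗(u)‖ < ∞`) and `t > 0`,
`sup_{u ≥ 0} |M_t^{[2]} g(u) - g(u)| ≤ ‖g''‖/(8t²) + ‖u g'''(u)‖/(6t²)
 + 9‖u² g⁗(u)‖/(16t²) < ∞` (suprema in `ℝ≥0∞`, over `(0,∞)` on the right). -/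
theorem stmt_14 (g : ℝ → ℝ)
    (hg_cont : ContinuousOn g (Set.Ici 0))
    (hg_cd : ContDiffOn ℝ 4 g (Set.Ioi 0))
    (hg2 : (⨆ u ∈ Set.Ioi (0:ℝ), (‖iteratedDeriv 2 g u‖₊ : ℝ≥0∞)) ≠ ⊤)
    (hg4 : (⨆ u ∈ Set.Ioi (0:ℝ), (‖u ^ 2 * iteratedDeriv 4 g u‖₊ : ℝ≥0∞)) ≠ ⊤)
    (t : ℝ) (ht : 0 < t) :
    ∀ B : ℝ≥0∞,
      B = ENNReal.ofReal (1 / (8 * t ^ 2))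
            * (⨆ u ∈ Set.Ioi (0:ℝ), (‖iteratedDeriv 2 g u‖₊ : ℝ≥0∞))
          + ENNReal.ofReal (1 / (6 * t ^ 2))
            * (⨆ u ∈ Set.Ioi (0:ℝ), (‖u * iteratedDeriv 3 g u‖₊ : ℝ≥0∞))
          + ENNReal.ofReal (9 / (16 * t ^ 2))
            * (⨆ u ∈ Set.Ioi (0:ℝ), (‖u ^ 2 * iteratedDeriv 4 g u‖₊ : ℝ≥0∞)) →
      (⨆ u ∈ Set.Ici (0:ℝ), (‖Mt2 t g u - g u‖₊ : ℝ≥0∞)) ≤ B ∧ B < ⊤ := by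
  rintro B rfl
  have hg3 := biSup_nnnorm_mul_iteratedDeriv_three_ne_top hg_cd hg2 hg4
  refine ⟨?_, by finiteness⟩
  calc (⨆ u ∈ Set.Ici (0 : ℝ), (‖Mt2 t g u - g u‖₊ : ℝ≥0∞))
      ≤ ENNReal.ofReal _ := biSup_nnnorm_le_ofReal fun u hu =>
        abs_Mt2_sub_le hg_cont hg_cd (abs_le_toReal_biSup_nnnorm hg2)
          (abs_le_toReal_biSup_nnnorm hg3) (abs_le_toReal_biSup_nnnorm hg4) ht hu
    _ = ENNReal.ofReal (1 / (8 * t ^ 2)) * _ + ENNReal.ofReal (1 / (6 * t ^ 2)) * _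
          + ENNReal.ofReal (1 / (2 * t ^ 2)) * _ := by
        rw [ENNReal.ofReal_add (by positivity) (by positivity),
          ENNReal.ofReal_add (by positivity) (by positivity),
          ENNReal.ofReal_mul (by positivity), ENNReal.ofReal_mul (by positivity),
          ENNReal.ofReal_mul (by positivity), ENNReal.ofReal_toReal hg2,
          ENNReal.ofReal_toReal hg3, ENNReal.ofReal_toReal hg4]
    _ ≤ _ := by
        gcongr _ + ENNReal.ofReal ?_ * _
        rw [div_le_div_iff₀ (by positivity) (by positivity)]
        nlinarith [sq_nonneg t]
end
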